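/- arXiv:2410.21976 — 2 statements merged into one kernel-verified Lean document; each statement's English description precedes it below -/
import Mathlib

section
/- Let H, H₁, H₂ be finite-dimensional Hilbert spaces, let K be an arbitrary matrix from H₁ ⊗ H₂ to H, and let p, q, s be real parameters. For A positive definite on H and B positive definite on H₂, define F(A,B) := Tr[(B^{q/2} · Tr₁(K† A^p K) · B^{q/2})^s]. Then: (1) F is jointly concave if 0 ≤ q ≤ p ≤ 1 and 0 < s ≤ 1/(p+q); (2) F is jointly convex if −1 ≤ q ≤ p ≤ 0 and s > 0; (3) F is jointly convex if −1 ≤ q ≤ 0, 1 ≤ p ≤ 2, (p,q) ≠ (1,−1), and s ≥ 1/(p+q). Here jointly concave (resp. convex) means that for all positive definite A₀, A₁ on H, positive definite B₀, B₁ on H₂, and t ∈ [0,1], F(t·A₀+(1−t)·A₁, t·B₀+(1−t)·B₁) ≥ (resp. ≤) t·F(A₀,B₀) + (1−t)·F(A₁,B₁). -/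
open scoped Kronecker ComplexOrder
open Matrix

/-- Real power of a (Hermitian, in practice positive semidefinite) matrix, defined spectrally:
positive eigenvalues are raised to the power `t`, zero (and negative) eigenvalues are sent to `0`. -/
noncomputable def matPow {n : Type*} [Fintype n] [DecidableEq n]
    (M : Matrix n n ℂ) (t : ℝ) : Matrix n n ℂ :=
  if hM : M.IsHermitian then
    (hM.eigenvectorUnitary : Matrix n n ℂ) *
      Matrix.diagonal (fun i =>
        ((if 0 < hM.eigenvalues i then (hM.eigenvalues i) ^ t else 0 : ℝ) : ℂ)) *
      (star (hM.eigenvectorUnitary : Matrix n n ℂ))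
  else 0

/-- Partial trace over the first tensor factor. -/
noncomputable def ptraceFst {m n : Type*} [Fintype m] [Fintype n]
    (M : Matrix (m × n) (m × n) ℂ) : Matrix n n ℂ :=
  Matrix.of fun j j' => ∑ i, M (i, j) (i, j')

/-- Partial trace over the second tensor factor. -/
noncomputable def ptraceSnd {m n : Type*} [Fintype m] [Fintype n]
    (M : Matrix (m × n) (m × n) ℂ) : Matrix m m ℂ :=
  Matrix.of fun i i' => ∑ j, M (i, j) (i', j)

/-- A density matrix: positive semidefinite with unit trace. -/
def IsDensity {n : Type*} [Fintype n] [DecidableEq n] (ρ : Matrix n n ℂ) : Prop :=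
  ρ.PosSemidef ∧ ρ.trace = 1

/-- The trace functional of Statement 3:
`F(A,B) = Tr[(B^{q/2} · Tr₁(K† A^p K) · B^{q/2})^s]`, where
`K` is a matrix from `H₁ ⊗ H₂` to `H`. -/
noncomputable def Ffun {m n₁ n₂ : Type*} [Fintype m] [DecidableEq m]
    [Fintype n₁] [DecidableEq n₁] [Fintype n₂] [DecidableEq n₂]
    (K : Matrix m (n₁ × n₂) ℂ) (p q s : ℝ)
    (A : Matrix m m ℂ) (B : Matrix n₂ n₂ ℂ) : ℝ :=
  (Matrix.trace (matPow
    (matPow B (q / 2) * ptraceFst (Kᴴ * matPow A p * K) * matPow B (q / 2)) s)).re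

/-- Spectral representation data. -/
structure Sp {n : Type*} [Fintype n] [DecidableEq n] (A U : Matrix n n ℂ) (a : n → ℝ) : Prop where
  l : Uᴴ * U = 1
  r : U * Uᴴ = 1
  eq : A = U * diagonal (fun i => (a i : ℂ)) * Uᴴ

theorem Sp.fn_eq {n : Type*} [Fintype n] [DecidableEq n] {A U V : Matrix n n ℂ} {a b : n → ℝ}
    (hU : Sp A U a) (hV : Sp A V b) (f : ℝ → ℝ) :
    U * diagonal (fun i => (f (a i) : ℂ)) * Uᴴ = V * diagonal (fun i => (f (b i) : ℂ)) * Vᴴ := by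
  have h1 : diagonal (fun i => (a i : ℂ)) * (Uᴴ * V) = (Uᴴ * V) * diagonal (fun i => (b i : ℂ)) := by
    have e : Uᴴ * A * V = Uᴴ * A * V := rfl
    conv_lhs at e => rw [hU.eq]
    conv_rhs at e => rw [hV.eq]
    calc _ = (Uᴴ * U) * diagonal (fun i => (a i : ℂ)) * (Uᴴ * V) := by rw [hU.l, one_mul]
      _ = Uᴴ * (U * diagonal (fun i => (a i : ℂ)) * Uᴴ) * V := by simp only [mul_assoc]
      _ = Uᴴ * (V * diagonal (fun i => (b i : ℂ)) * Vᴴ) * V := e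
      _ = (Uᴴ * V) * diagonal (fun i => (b i : ℂ)) * (Vᴴ * V) := by simp only [mul_assoc]
      _ = _ := by rw [hV.l, mul_one]
  have h2 : diagonal (fun i => (f (a i) : ℂ)) * (Uᴴ * V)
      = (Uᴴ * V) * diagonal (fun i => (f (b i) : ℂ)) := by
    ext i j
    have := congrFun (congrFun h1 i) j
    rw [diagonal_mul, mul_diagonal] at this ⊢
    by_cases h : (Uᴴ * V) i j = 0
    · simp [h]
    · have h3 : (a i : ℂ) = b j := by
        rw [mul_comm] at this
        exact mul_left_cancel₀ h this
      have h4 : a i = b j := by exact_mod_cast h3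
      rw [h4, mul_comm]
  calc _ = U * (diagonal (fun i => (f (a i) : ℂ)) * (Uᴴ * V)) * Vᴴ := by
        simp only [mul_assoc]; rw [hV.r, mul_one]
    _ = (U * Uᴴ) * V * diagonal (fun i => (f (b i) : ℂ)) * Vᴴ := by rw [h2]; simp only [mul_assoc]
    _ = _ := by rw [hU.r, one_mul]

theorem Sp.of_herm {n : Type*} [Fintype n] [DecidableEq n] {A : Matrix n n ℂ}
    (h : A.IsHermitian) : Sp A (h.eigenvectorUnitary : Matrix n n ℂ) h.eigenvalues where
  l := Unitary.coe_star_mul_self h.eigenvectorUnitary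
  r := Unitary.coe_mul_star_self h.eigenvectorUnitary
  eq := by
    have := h.spectral_theorem
    rw [Unitary.conjStarAlgAut_apply] at this
    exact this

theorem Sp.herm {n : Type*} [Fintype n] [DecidableEq n] {A U : Matrix n n ℂ} {a : n → ℝ}
    (h : Sp A U a) : A.IsHermitian := by
  rw [h.eq]
  unfold Matrix.IsHermitian
  simp only [conjTranspose_mul, conjTranspose_conjTranspose, diagonal_conjTranspose, mul_assoc]
  congr 3
  ext i
  simp

theorem Sp.pw {n : Type*} [Fintype n] [DecidableEq n] {A U : Matrix n n ℂ} {a : n → ℝ}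
    (h : Sp A U a) (ha : ∀ i, 0 < a i) (t : ℝ) :
    matPow A t = U * diagonal (fun i => ((a i ^ t : ℝ) : ℂ)) * Uᴴ := by
  unfold matPow
  rw [dif_pos h.herm]
  have := (Sp.of_herm h.herm).fn_eq h (fun x => if 0 < x then x ^ t else 0)
  simp only [ha, if_true] at this
  exact this

theorem Sp.exists_pos {n : Type*} [Fintype n] [DecidableEq n] {A : Matrix n n ℂ}
    (h : A.PosDef) : ∃ U a, Sp A U a ∧ ∀ i, 0 < a i :=
  ⟨_, _, Sp.of_herm h.isHermitian, fun i => h.eigenvalues_pos i⟩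

theorem Sp.posDef {n : Type*} [Fintype n] [DecidableEq n] {A U : Matrix n n ℂ} {a : n → ℝ}
    (h : Sp A U a) (ha : ∀ i, 0 < a i) : A.PosDef := by
  rw [h.eq]
  have hd : (diagonal (fun i => (a i : ℂ))).PosDef := by
    rw [posDef_diagonal_iff]
    intro i
    exact_mod_cast ha i
  apply hd.mul_mul_conjTranspose_same
  intro x y hxy
  have := congrArg (fun z => z ᵥ* Uᴴ) hxy
  simpa [vecMul_vecMul, h.r] using this

theorem Sp.sp_pw {n : Type*} [Fintype n] [DecidableEq n] {A U : Matrix n n ℂ} {a : n → ℝ}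
    (h : Sp A U a) (ha : ∀ i, 0 < a i) (t : ℝ) : Sp (matPow A t) U (fun i => a i ^ t) :=
  ⟨h.l, h.r, h.pw ha t⟩

section pw
variable {n : Type*} [Fintype n] [DecidableEq n] {A : Matrix n n ℂ}

theorem pw_posDef (h : A.PosDef) (t : ℝ) : (matPow A t).PosDef := by
  obtain ⟨U, a, hU, ha⟩ := Sp.exists_pos h
  exact (hU.sp_pw ha t).posDef (fun i => Real.rpow_pos_of_pos (ha i) t)

theorem pw_pw (h : A.PosDef) (s t : ℝ) : matPow (matPow A s) t = matPow A (s * t) := by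
  obtain ⟨U, a, hU, ha⟩ := Sp.exists_pos h
  rw [(hU.sp_pw ha s).pw (fun i => Real.rpow_pos_of_pos (ha i) s), hU.pw ha]
  congr 3
  ext i
  rw [Real.rpow_mul (ha i).le]

theorem pw_one (h : A.PosDef) : matPow A 1 = A := by
  obtain ⟨U, a, hU, ha⟩ := Sp.exists_pos h
  rw [hU.pw ha]
  simp only [Real.rpow_one]
  exact hU.eq.symm

theorem pw_zero (h : A.PosDef) : matPow A 0 = 1 := by
  obtain ⟨U, a, hU, ha⟩ := Sp.exists_pos h
  rw [hU.pw ha]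
  simp [hU.r]

theorem pw_mul (h : A.PosDef) (s t : ℝ) : matPow A s * matPow A t = matPow A (s + t) := by
  obtain ⟨U, a, hU, ha⟩ := Sp.exists_pos h
  rw [hU.pw ha, hU.pw ha, hU.pw ha]
  calc _ = U * (diagonal (fun i => ((a i ^ s : ℝ) : ℂ)) * (Uᴴ * U) *
        diagonal (fun i => ((a i ^ t : ℝ) : ℂ))) * Uᴴ := by simp only [mul_assoc]
    _ = _ := by
      rw [hU.l, mul_one, diagonal_mul_diagonal]
      congr 3
      ext i
      rw [Real.rpow_add (ha i)]; push_cast; rfl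

theorem pw_herm (h : A.PosDef) (t : ℝ) : (matPow A t)ᴴ = matPow A t := (pw_posDef h t).isHermitian

theorem pw_onemat (t : ℝ) : matPow (1 : Matrix n n ℂ) t = 1 := by
  have : Sp (1 : Matrix n n ℂ) 1 (fun _ => 1) := ⟨by simp, by simp, by simp⟩
  rw [this.pw (by simp)]; simp

theorem pw_diag (d : n → ℝ) (hd : ∀ i, 0 < d i) (t : ℝ) :
    matPow (diagonal (fun i => (d i : ℂ))) t = diagonal (fun i => ((d i ^ t : ℝ) : ℂ)) := by
  have : Sp (diagonal (fun i => (d i : ℂ))) 1 d := ⟨by simp, by simp, by simp⟩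
  rw [this.pw hd]; simp

theorem pw_conj (h : A.PosDef) {V : Matrix n n ℂ} (hl : Vᴴ * V = 1) (hr : V * Vᴴ = 1) (t : ℝ) :
    matPow (V * A * Vᴴ) t = V * matPow A t * Vᴴ := by
  obtain ⟨U, a, hU, ha⟩ := Sp.exists_pos h
  have : Sp (V * A * Vᴴ) (V * U) a := by
    refine ⟨?_, ?_, ?_⟩
    · rw [conjTranspose_mul, mul_assoc, ← mul_assoc Vᴴ, hl, one_mul, hU.l]
    · rw [conjTranspose_mul, mul_assoc, ← mul_assoc U, hU.r, one_mul, hr]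
    · conv_lhs => rw [hU.eq]
      simp only [conjTranspose_mul, mul_assoc]
  rw [this.pw ha, hU.pw ha]
  simp only [conjTranspose_mul, mul_assoc]

/-- trace of power -/
noncomputable def T (A : Matrix n n ℂ) (t : ℝ) : ℝ := (matPow A t).trace.re

theorem T_conj (h : A.PosDef) {V : Matrix n n ℂ} (hl : Vᴴ * V = 1) (hr : V * Vᴴ = 1) (t : ℝ) :
    T (V * A * Vᴴ) t = T A t := by
  unfold T
  rw [pw_conj h hl hr, trace_mul_comm, ← mul_assoc, hl, one_mul]

theorem posDef_conj (h : A.PosDef) {L : Matrix n n ℂ} (hL : IsUnit L) : (Lᴴ * A * L).PosDef := by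
  apply h.conjTranspose_mul_mul_same
  exact mulVec_injective_of_isUnit hL

theorem posDef_conj' (h : A.PosDef) {L : Matrix n n ℂ} (hL : IsUnit L) : (L * A * Lᴴ).PosDef := by
  have := posDef_conj h (L := Lᴴ) (by simpa using hL.star)
  simpa using this

/-- `Tr (YᴴPY)^s = Tr (P^{1/2} Y Yᴴ P^{1/2})^s`, in the form `Tr (TᴴT)^s = Tr(TTᴴ)^s`. -/
theorem T_swap {S : Matrix n n ℂ} (hS : IsUnit S) (t : ℝ) : T (Sᴴ * S) t = T (S * Sᴴ) t := by
  have hP : (Sᴴ * S).PosDef := by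
    have := posDef_conj (PosDef.one (n := n) (R := ℂ)) hS
    simpa using this
  set P := Sᴴ * S with hPdef
  set W := S * matPow P (-(1/2)) with hW
  have hl : Wᴴ * W = 1 := by
    rw [hW, conjTranspose_mul, pw_herm hP]
    calc _ = matPow P (-(1/2)) * P * matPow P (-(1/2)) := by rw [hPdef]; simp only [mul_assoc]
      _ = matPow P (-(1/2)) * matPow P 1 * matPow P (-(1/2)) := by rw [pw_one hP]
      _ = 1 := by rw [pw_mul hP, pw_mul hP, ← pw_zero hP]; norm_num
  have hr : W * Wᴴ = 1 := mul_eq_one_comm.mp hl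
  rw [← T_conj hP hl hr]
  congr 1
  rw [hW, conjTranspose_mul, pw_herm hP]
  calc _ = S * (matPow P (-(1/2)) * P * matPow P (-(1/2))) * Sᴴ := by simp only [mul_assoc]
    _ = S * (matPow P (-(1/2)) * matPow P 1 * matPow P (-(1/2))) * Sᴴ := by rw [pw_one hP]
    _ = _ := by rw [pw_mul hP, pw_mul hP]; norm_num [pw_zero hP]

theorem pw_unit (h : A.PosDef) (t : ℝ) : IsUnit (matPow A t) := (pw_posDef h t).isUnit

end pw

/-- convex combination -/
noncomputable def mix {n : Type*} (t : ℝ) (A B : Matrix n n ℂ) : Matrix n n ℂ :=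
  (t : ℂ) • A + ((1 - t : ℝ) : ℂ) • B

theorem mix_posDef {n : Type*} [Fintype n] [DecidableEq n] {t : ℝ} (h0 : 0 ≤ t) (h1 : t ≤ 1)
    {A B : Matrix n n ℂ} (hA : A.PosDef) (hB : B.PosDef) : (mix t A B).PosDef := by
  unfold mix
  rcases h0.eq_or_lt with h | h
  · subst h; simpa using hB
  rcases h1.eq_or_lt with h' | h'
  · subst h'; simpa using hA
  · refine (hA.smul ?_).add (hB.smul ?_)
    · exact_mod_cast h
    · exact_mod_cast (by linarith : (0:ℝ) < 1 - t)

theorem mix_tr {n m : Type*} [Fintype n] [Fintype m] (t : ℝ)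
    (A B : Matrix n n ℂ) (P : Matrix m n ℂ) (Q : Matrix n m ℂ) :
    (trace (P * mix t A B * Q)).re
      = t * (trace (P * A * Q)).re + (1 - t) * (trace (P * B * Q)).re := by
  unfold mix
  simp only [Matrix.mul_add, Matrix.add_mul, Matrix.mul_smul, Matrix.smul_mul, trace_add, trace_smul, smul_eq_mul,
    Complex.add_re, Complex.re_ofReal_mul]

theorem mix_tr_l {n m : Type*} [Fintype n] [DecidableEq n] [Fintype m] (t : ℝ)
    (A B : Matrix n n ℂ) (P : Matrix n n ℂ) :
    (trace (mix t A B * P)).re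
      = t * (trace (A * P)).re + (1 - t) * (trace (B * P)).re := by
  simpa using mix_tr t A B 1 P

section dbl
variable {m n : Type*} [Fintype m] [DecidableEq m] [Fintype n] [DecidableEq n]

theorem polar_tr {U : Matrix m m ℂ} {V : Matrix n n ℂ} (f : m → ℝ) (g : n → ℝ) (K Y : Matrix m n ℂ) :
    (trace ((U * diagonal (fun i => (f i : ℂ)) * Uᴴ) * K *
      (V * diagonal (fun i => (g i : ℂ)) * Vᴴ) * Yᴴ)).re
      = ∑ i, ∑ j, f i * g j * ((Uᴴ * K * V) i j * star ((Uᴴ * Y * V) i j)).re := by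
  have : trace ((U * diagonal (fun i => (f i : ℂ)) * Uᴴ) * K *
      (V * diagonal (fun i => (g i : ℂ)) * Vᴴ) * Yᴴ)
      = trace ((diagonal (fun i => (f i : ℂ)) * (Uᴴ * K * V) * diagonal (fun i => (g i : ℂ)))
        * (Uᴴ * Y * V)ᴴ) := by
    calc _ = trace (U * (diagonal (fun i => (f i : ℂ)) * (Uᴴ * K *
      V) * diagonal (fun i => (g i : ℂ)) * (Vᴴ * Yᴴ))) := by simp only [Matrix.mul_assoc]
      _ = _ := by
        rw [trace_mul_comm]; simp only [conjTranspose_mul, conjTranspose_conjTranspose, Matrix.mul_assoc]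
  rw [this, trace]
  simp only [diag_apply, mul_apply (N := (Uᴴ * Y * V)ᴴ), mul_diagonal, diagonal_mul,
    conjTranspose_apply, Complex.re_sum]
  refine Finset.sum_congr rfl fun i _ => Finset.sum_congr rfl fun j _ => ?_
  have : (f i : ℂ) * (Uᴴ * K * V) i j * (g j : ℂ) * star ((Uᴴ * Y * V) i j)
    = ((f i * g j : ℝ) : ℂ) * ((Uᴴ * K * V) i j * star ((Uᴴ * Y * V) i j)) := by
    push_cast; ring
  rw [this, Complex.re_ofReal_mul]

/-- Double operator sums. -/
noncomputable def dbl {A : Matrix m m ℂ} {B : Matrix n n ℂ} (hA : A.PosDef) (hB : B.PosDef)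
    (K : Matrix m n ℂ) (h : ℝ → ℝ → ℝ) : ℝ :=
  ∑ i, ∑ j, h (hA.isHermitian.eigenvalues i) (hB.isHermitian.eigenvalues j) *
    Complex.normSq (((hA.isHermitian.eigenvectorUnitary : Matrix m m ℂ)ᴴ * K *
      (hB.isHermitian.eigenvectorUnitary : Matrix n n ℂ)) i j)

theorem dbl_congr {A : Matrix m m ℂ} {B : Matrix n n ℂ} (hA : A.PosDef) (hB : B.PosDef)
    (K : Matrix m n ℂ) {h h' : ℝ → ℝ → ℝ} (e : ∀ a b, 0 < a → 0 < b → h a b = h' a b) :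
    dbl hA hB K h = dbl hA hB K h' := by
  unfold dbl
  refine Finset.sum_congr rfl fun i _ => Finset.sum_congr rfl fun j _ => ?_
  rw [e _ _ (hA.eigenvalues_pos i) (hB.eigenvalues_pos j)]

theorem dbl_mono {A : Matrix m m ℂ} {B : Matrix n n ℂ} (hA : A.PosDef) (hB : B.PosDef)
    (K : Matrix m n ℂ) {h h' : ℝ → ℝ → ℝ} (e : ∀ a b, 0 < a → 0 < b → h a b ≤ h' a b) :
    dbl hA hB K h ≤ dbl hA hB K h' := by
  unfold dbl
  refine Finset.sum_le_sum fun i _ => Finset.sum_le_sum fun j _ => ?_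
  exact mul_le_mul_of_nonneg_right (e _ _ (hA.eigenvalues_pos i) (hB.eigenvalues_pos j))
    (Complex.normSq_nonneg _)

theorem dbl_add {A : Matrix m m ℂ} {B : Matrix n n ℂ} (hA : A.PosDef) (hB : B.PosDef)
    (K : Matrix m n ℂ) (h h' : ℝ → ℝ → ℝ) :
    dbl hA hB K (fun a b => h a b + h' a b) = dbl hA hB K h + dbl hA hB K h' := by
  unfold dbl
  simp only [add_mul, Finset.sum_add_distrib]

theorem dbl_smul {A : Matrix m m ℂ} {B : Matrix n n ℂ} (hA : A.PosDef) (hB : B.PosDef)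
    (K : Matrix m n ℂ) (c : ℝ) (h : ℝ → ℝ → ℝ) :
    dbl hA hB K (fun a b => c * h a b) = c * dbl hA hB K h := by
  unfold dbl
  simp only [Finset.mul_sum, mul_assoc]

theorem dbl_pow {A : Matrix m m ℂ} {B : Matrix n n ℂ} (hA : A.PosDef) (hB : B.PosDef)
    (K : Matrix m n ℂ) (p r : ℝ) :
    dbl hA hB K (fun a b => a ^ p * b ^ r) = (trace (matPow A p * K * matPow B r * Kᴴ)).re := by
  rw [(Sp.of_herm hA.isHermitian).pw (fun i => hA.eigenvalues_pos i),
    (Sp.of_herm hB.isHermitian).pw (fun i => hB.eigenvalues_pos i),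
    polar_tr]
  unfold dbl
  refine Finset.sum_congr rfl fun i _ => Finset.sum_congr rfl fun j _ => ?_
  congr 1
  rw [Complex.star_def, Complex.mul_conj, Complex.ofReal_re]

/-- joint convexity of the double operator sum -/
def JC (m n : Type*) [Fintype m] [DecidableEq m] [Fintype n] [DecidableEq n]
    (h : ℝ → ℝ → ℝ) : Prop :=
  ∀ (A₀ A₁ : Matrix m m ℂ) (hA₀ : A₀.PosDef) (hA₁ : A₁.PosDef)
    (B₀ B₁ : Matrix n n ℂ) (hB₀ : B₀.PosDef) (hB₁ : B₁.PosDef) (K : Matrix m n ℂ)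
    (t : ℝ) (h0 : 0 ≤ t) (h1 : t ≤ 1),
    dbl (mix_posDef h0 h1 hA₀ hA₁) (mix_posDef h0 h1 hB₀ hB₁) K h ≤
      t * dbl hA₀ hB₀ K h + (1 - t) * dbl hA₁ hB₁ K h

theorem JC.congr {h h' : ℝ → ℝ → ℝ} (H : JC m n h)
    (e : ∀ a b, 0 < a → 0 < b → h' a b = h a b) : JC m n h' := by
  intro A₀ A₁ hA₀ hA₁ B₀ B₁ hB₀ hB₁ K t h0 h1
  rw [dbl_congr _ _ _ e, dbl_congr _ _ _ e, dbl_congr _ _ _ e]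
  exact H _ _ _ _ _ _ _ _ _ _ h0 h1

theorem JC.add {h h' : ℝ → ℝ → ℝ} (H : JC m n h) (H' : JC m n h') :
    JC m n (fun a b => h a b + h' a b) := by
  intro A₀ A₁ hA₀ hA₁ B₀ B₁ hB₀ hB₁ K t h0 h1
  rw [dbl_add, dbl_add, dbl_add]
  have := H _ _ hA₀ hA₁ _ _ hB₀ hB₁ K t h0 h1
  have := H' _ _ hA₀ hA₁ _ _ hB₀ hB₁ K t h0 h1
  linarith

theorem JC.smul {h : ℝ → ℝ → ℝ} (H : JC m n h) {c : ℝ} (hc : 0 ≤ c) :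
    JC m n (fun a b => c * h a b) := by
  intro A₀ A₁ hA₀ hA₁ B₀ B₁ hB₀ hB₁ K t h0 h1
  rw [dbl_smul, dbl_smul, dbl_smul]
  have := mul_le_mul_of_nonneg_left (H _ _ hA₀ hA₁ _ _ hB₀ hB₁ K t h0 h1) hc
  linarith

theorem JC.lin (c : ℝ) : JC m n (fun a _ => c * a) := by
  intro A₀ A₁ hA₀ hA₁ B₀ B₁ hB₀ hB₁ K t h0 h1
  have e : ∀ {A : Matrix m m ℂ} {B : Matrix n n ℂ} (hA : A.PosDef) (hB : B.PosDef),
    dbl hA hB K (fun a _ => c * a) = c * (trace (A * (K * Kᴴ))).re := by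
    intro A B hA hB
    rw [dbl_smul, dbl_congr hA hB K (h' := fun a b => a ^ (1:ℝ) * b ^ (0:ℝ)) (by intros; simp),
      dbl_pow, pw_one hA, pw_zero hB, Matrix.mul_one, Matrix.mul_assoc]
  rw [e, e, e, mix_tr_l (m := m)]
  apply le_of_eq; ring

/-- affine minorant -/
noncomputable def Lam (l1 l2 c0 c1 c2 : ℝ) (K Y : Matrix m n ℂ) (A : Matrix m m ℂ)
    (B : Matrix n n ℂ) : ℝ :=
  2 * (l1 * (trace (A * K * (1 : Matrix n n ℂ) * Yᴴ)).re + l2 * (trace ((1 : Matrix m m ℂ) * K * B * Yᴴ)).re)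
    - (c0 * (trace ((1 : Matrix m m ℂ) * Y * (1 : Matrix n n ℂ) * Yᴴ)).re + c1 * (trace (A * Y * (1 : Matrix n n ℂ) * Yᴴ)).re
      + c2 * (trace ((1 : Matrix m m ℂ) * Y * B * Yᴴ)).re)

theorem Lam_mix (l1 l2 c0 c1 c2 : ℝ) (K Y : Matrix m n ℂ) (A₀ A₁ : Matrix m m ℂ)
    (B₀ B₁ : Matrix n n ℂ) (t : ℝ) :
    Lam l1 l2 c0 c1 c2 K Y (mix t A₀ A₁) (mix t B₀ B₁) =
      t * Lam l1 l2 c0 c1 c2 K Y A₀ B₀ + (1 - t) * Lam l1 l2 c0 c1 c2 K Y A₁ B₁ := by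
  unfold Lam
  simp only [Matrix.mul_one, Matrix.one_mul]
  rw [mix_tr, mix_tr, Matrix.mul_assoc (mix t A₀ A₁) K, Matrix.mul_assoc (mix t A₀ A₁) Y,
    mix_tr_l (m := m), mix_tr_l (m := m)]
  simp only [Matrix.mul_assoc]
  ring

theorem Lam_eq (l1 l2 c0 c1 c2 : ℝ) (K Y : Matrix m n ℂ) {A U : Matrix m m ℂ}
    {B V : Matrix n n ℂ} {a : m → ℝ} {b : n → ℝ} (hU : Sp A U a) (hV : Sp B V b) :
    Lam l1 l2 c0 c1 c2 K Y A B = ∑ i, ∑ j,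
      (2 * ((l1 * a i + l2 * b j) * ((Uᴴ * K * V) i j * star ((Uᴴ * Y * V) i j)).re)
        - (c0 + c1 * a i + c2 * b j) * Complex.normSq ((Uᴴ * Y * V) i j)) := by
  have e1 : (1 : Matrix m m ℂ) = U * diagonal (fun i => ((1:ℝ) : ℂ)) * Uᴴ := by
    simp [hU.r]
  have e2 : (1 : Matrix n n ℂ) = V * diagonal (fun i => ((1:ℝ) : ℂ)) * Vᴴ := by
    simp [hV.r]
  unfold Lam
  rw [e1, e2, hU.eq, hV.eq]
  simp only [polar_tr]
  simp only [Finset.mul_sum, ← Finset.sum_add_distrib, ← Finset.sum_sub_distrib]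
  refine Finset.sum_congr rfl fun i _ => Finset.sum_congr rfl fun j _ => ?_
  rw [Complex.star_def, Complex.mul_conj, Complex.ofReal_re]
  ring

theorem quad_aux (k y : ℂ) (l c : ℝ) (hc : 0 < c) :
    2 * (l * (k * star y).re) - c * Complex.normSq y ≤ l ^ 2 / c * Complex.normSq k := by
  have h : l ^ 2 / c * Complex.normSq k - (2 * (l * (k * star y).re) - c * Complex.normSq y)
     = c * Complex.normSq (y - ((l / c : ℝ) : ℂ) * k) := by
    simp only [Complex.normSq_apply, Complex.star_def, Complex.mul_re, Complex.sub_re,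
      Complex.sub_im, Complex.conj_re, Complex.conj_im, Complex.mul_im, Complex.ofReal_re,
      Complex.ofReal_im]
    field_simp
    ring
  have := mul_nonneg hc.le (Complex.normSq_nonneg (y - ((l / c : ℝ) : ℂ) * k))
  linarith

theorem quad_aux_eq (k : ℂ) (l c : ℝ) (hc : 0 < c) :
    2 * (l * (k * star (((l / c : ℝ) : ℂ) * k)).re) - c * Complex.normSq (((l / c : ℝ) : ℂ) * k)
      = l ^ 2 / c * Complex.normSq k := by
  simp only [Complex.normSq_apply, Complex.star_def, Complex.mul_re, 
      Complex.conj_re, Complex.conj_im, Complex.mul_im, Complex.ofReal_re,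
      Complex.ofReal_im]
  field_simp
  ring

theorem JC.quad (l1 l2 c0 c1 c2 : ℝ) (hc : ∀ a b : ℝ, 0 < a → 0 < b → 0 < c0 + c1 * a + c2 * b) :
    JC m n (fun a b => (l1 * a + l2 * b) ^ 2 / (c0 + c1 * a + c2 * b)) := by
  have ub : ∀ {A : Matrix m m ℂ} {B : Matrix n n ℂ} (hA : A.PosDef) (hB : B.PosDef)
      (K Y : Matrix m n ℂ), Lam l1 l2 c0 c1 c2 K Y A B ≤
      dbl hA hB K (fun a b => (l1 * a + l2 * b) ^ 2 / (c0 + c1 * a + c2 * b)) := by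
    intro A B hA hB K Y
    rw [Lam_eq _ _ _ _ _ _ _ (Sp.of_herm hA.isHermitian) (Sp.of_herm hB.isHermitian)]
    unfold dbl
    refine Finset.sum_le_sum fun i _ => Finset.sum_le_sum fun j _ => ?_
    exact quad_aux _ _ _ _ (hc _ _ (hA.eigenvalues_pos i) (hB.eigenvalues_pos j))
  have att : ∀ {A : Matrix m m ℂ} {B : Matrix n n ℂ} (hA : A.PosDef) (hB : B.PosDef)
      (K : Matrix m n ℂ), ∃ Y, Lam l1 l2 c0 c1 c2 K Y A B =
      dbl hA hB K (fun a b => (l1 * a + l2 * b) ^ 2 / (c0 + c1 * a + c2 * b)) := by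
    intro A B hA hB K
    have hU := Sp.of_herm hA.isHermitian
    have hV := Sp.of_herm hB.isHermitian
    set U := (hA.isHermitian.eigenvectorUnitary : Matrix m m ℂ)
    set V := (hB.isHermitian.eigenvectorUnitary : Matrix n n ℂ)
    set a := hA.isHermitian.eigenvalues
    set b := hB.isHermitian.eigenvalues
    let Z : Matrix m n ℂ := of fun i j =>
      (((l1 * a i + l2 * b j) / (c0 + c1 * a i + c2 * b j) : ℝ) : ℂ) * (Uᴴ * K * V) i j
    refine ⟨U * Z * Vᴴ, ?_⟩
    rw [Lam_eq _ _ _ _ _ _ _ hU hV]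
    have : Uᴴ * (U * Z * Vᴴ) * V = Z := by
      calc _ = (Uᴴ * U) * Z * (Vᴴ * V) := by simp only [Matrix.mul_assoc]
        _ = Z := by rw [hU.l, hV.l, Matrix.one_mul, Matrix.mul_one]
    rw [this]
    unfold dbl
    refine Finset.sum_congr rfl fun i _ => Finset.sum_congr rfl fun j _ => ?_
    exact quad_aux_eq _ _ _ (hc _ _ (hA.eigenvalues_pos i) (hB.eigenvalues_pos j))
  intro A₀ A₁ hA₀ hA₁ B₀ B₁ hB₀ hB₁ K t h0 h1
  obtain ⟨Y, hY⟩ := att (mix_posDef h0 h1 hA₀ hA₁) (mix_posDef h0 h1 hB₀ hB₁) K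
  rw [← hY, Lam_mix]
  exact add_le_add (mul_le_mul_of_nonneg_left (ub _ _ _ _) h0)
    (mul_le_mul_of_nonneg_left (ub _ _ _ _) (by linarith))

open MeasureTheory Set in
theorem JC.int {h : ℝ → ℝ → ℝ} {k : ℝ → ℝ → ℝ → ℝ} {c : ℝ} (hc : 0 ≤ c)
    (H : ∀ τ, 0 < τ → JC m n (k τ))
    (hi : ∀ a b, 0 < a → 0 < b → IntegrableOn (fun τ => k τ a b) (Ioi 0))
    (e : ∀ a b, 0 < a → 0 < b → h a b = c * ∫ τ in Ioi 0, k τ a b) : JC m n h := by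
  have di : ∀ {A : Matrix m m ℂ} {B : Matrix n n ℂ} (hA : A.PosDef) (hB : B.PosDef)
      (K : Matrix m n ℂ), IntegrableOn (fun τ => dbl hA hB K (k τ)) (Ioi 0) := by
    intro A B hA hB K
    unfold dbl
    refine integrable_finsetSum _ fun i _ => integrable_finsetSum _ fun j _ => ?_
    exact (hi _ _ (hA.eigenvalues_pos i) (hB.eigenvalues_pos j)).mul_const _
  have de : ∀ {A : Matrix m m ℂ} {B : Matrix n n ℂ} (hA : A.PosDef) (hB : B.PosDef)
      (K : Matrix m n ℂ), dbl hA hB K h = c * ∫ τ in Ioi 0, dbl hA hB K (k τ) := by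
    intro A B hA hB K
    rw [dbl_congr hA hB K e, dbl_smul]
    congr 1
    unfold dbl
    rw [integral_finsetSum]
    · refine Finset.sum_congr rfl fun i _ => ?_
      rw [integral_finsetSum]
      · refine Finset.sum_congr rfl fun j _ => ?_
        rw [integral_mul_const]
      · intro j _
        exact (hi _ _ (hA.eigenvalues_pos i) (hB.eigenvalues_pos j)).mul_const _
    · intro i _
      refine integrable_finsetSum _ fun j _ => ?_
      exact (hi _ _ (hA.eigenvalues_pos i) (hB.eigenvalues_pos j)).mul_const _
  intro A₀ A₁ hA₀ hA₁ B₀ B₁ hB₀ hB₁ K t h0 h1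
  rw [de, de, de]
  have := setIntegral_mono_on (di (mix_posDef h0 h1 hA₀ hA₁) (mix_posDef h0 h1 hB₀ hB₁) K)
    (((di hA₀ hB₀ K).const_mul t).add ((di hA₁ hB₁ K).const_mul (1 - t))) measurableSet_Ioi
    (fun τ hτ => H τ hτ _ _ hA₀ hA₁ _ _ hB₀ hB₁ K t h0 h1)
  simp only [Pi.add_apply] at this
  rw [integral_add ((di hA₀ hB₀ K).const_mul t) ((di hA₁ hB₁ K).const_mul (1 - t)),
    integral_const_mul, integral_const_mul] at this
  have := mul_le_mul_of_nonneg_left this hc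
  linarith

theorem JC.ando {p : ℝ} (h1 : 1 ≤ p) (h2 : p ≤ 2) : JC m n (fun a b => a ^ p * b ^ (1 - p)) := by
  rcases h1.eq_or_lt with rfl | h1
  · exact (JC.lin 1).congr (by intros; simp)
  rcases h2.eq_or_lt with rfl | h2
  · refine (JC.quad 1 0 0 0 1 (by intros; simp; assumption)).congr ?_
    intro a b ha hb
    norm_num [Real.rpow_neg_one]
    rfl
  have hr : p - 1 ∈ Set.Ioo (0:ℝ) 1 := ⟨by linarith, by linarith⟩
  refine JC.int (k := fun τ a b => a * Real.rpowIntegrand₀₁ (p-1) τ (a / b))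
    (inv_nonneg.mpr (Real.integral_rpowIntegrand₀₁_one_pos hr).le) ?_ ?_ ?_
  · intro τ hτ
    refine ((JC.quad 1 0 0 1 τ (by intros; simp; positivity)).smul
      (Real.rpow_nonneg hτ.le (p - 1 - 1))).congr ?_
    intro a b ha hb
    rw [Real.rpowIntegrand₀₁_eq_pow_div hr hτ.le (by positivity)]
    field_simp
    ring
  · intro a b ha hb
    exact (Real.integrableOn_rpowIntegrand₀₁_Ioi hr (by positivity)).const_mul _
  · intro a b ha hb
    rw [MeasureTheory.integral_const_mul, mul_left_comm,
      ← Real.rpow_eq_const_mul_integral hr (by positivity), Real.div_rpow ha.le hb.le,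
      Real.rpow_sub_one ha.ne', show 1 - p = -(p - 1) by ring, Real.rpow_neg hb.le]
    field_simp

theorem JC.lieb {p : ℝ} (h1 : 0 < p) (h2 : p ≤ 1) :
    JC m n (fun a b => -(a ^ p * b ^ (1 - p))) := by
  rcases h2.eq_or_lt with rfl | h2
  · exact (JC.lin (-1)).congr (by intros; simp)
  have hr : p ∈ Set.Ioo (0:ℝ) 1 := ⟨by linarith, by linarith⟩
  refine JC.int (k := fun τ a b => -b * Real.rpowIntegrand₀₁ p τ (a / b))
    (inv_nonneg.mpr (Real.integral_rpowIntegrand₀₁_one_pos hr).le) ?_ ?_ ?_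
  · intro τ hτ
    refine (((JC.quad 1 0 0 1 τ (by intros; simp; positivity)).add (JC.lin (-1))).smul
      (c := τ ^ (p - 1) / τ) (by positivity)).congr ?_
    intro a b ha hb
    rw [Real.rpowIntegrand₀₁_eq_pow_div hr hτ.le (by positivity)]
    field_simp
    ring
  · intro a b ha hb
    exact (Real.integrableOn_rpowIntegrand₀₁_Ioi hr (by positivity)).const_mul _
  · intro a b ha hb
    rw [MeasureTheory.integral_const_mul, mul_left_comm,
      ← Real.rpow_eq_const_mul_integral hr (by positivity), Real.div_rpow ha.le hb.le,
      Real.rpow_sub hb, Real.rpow_one]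
    field_simp

theorem JC.neg {p : ℝ} (h1 : -1 ≤ p) (h2 : p ≤ 0) :
    JC m n (fun a b => a ^ p * b ^ (2:ℝ)) := by
  rcases h2.eq_or_lt with rfl | h2
  · exact (JC.quad 0 1 1 0 0 (by intros; simp)).congr (by intros; simp)
  rcases h1.eq_or_lt with rfl | h1
  · refine (JC.quad 0 1 0 1 0 (by intros; simp; assumption)).congr ?_
    intro a b ha hb
    norm_num [Real.rpow_neg_one]
    field_simp
  have hr : p + 1 ∈ Set.Ioo (0:ℝ) 1 := ⟨by linarith, by linarith⟩
  refine JC.int (k := fun τ a b => (b ^ 2 / a) * Real.rpowIntegrand₀₁ (p+1) τ a)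
    (inv_nonneg.mpr (Real.integral_rpowIntegrand₀₁_one_pos hr).le) ?_ ?_ ?_
  · intro τ hτ
    refine ((JC.quad 0 1 τ 1 0 (by intros; simp; positivity)).smul
      (c := τ ^ (p + 1 - 1)) (by positivity)).congr ?_
    intro a b ha hb
    rw [Real.rpowIntegrand₀₁_eq_pow_div hr hτ.le (by positivity)]
    field_simp
    ring
  · intro a b ha hb
    exact (Real.integrableOn_rpowIntegrand₀₁_Ioi hr (by positivity)).const_mul _
  · intro a b ha hb
    rw [MeasureTheory.integral_const_mul, mul_left_comm,
      ← Real.rpow_eq_const_mul_integral hr (by positivity), Real.rpow_add_one ha.ne']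
    norm_num
    field_simp

end dbl

/-- signed Bernoulli inequality -/
def Bern (σ s : ℝ) : Prop :=
  ∀ x y : ℝ, 0 < x → 0 < y → σ * ((1 - s) * x ^ s + s * (x ^ (s - 1) * y)) ≤ σ * y ^ s

theorem bern_id (s : ℝ) {x y : ℝ} (hx : 0 < x) (hy : 0 < y) :
    (1 - s) * x ^ s + s * (x ^ (s - 1) * y) = x ^ s * (1 + s * (y / x - 1)) ∧
      y ^ s = x ^ s * (1 + (y / x - 1)) ^ s := by
  constructor
  · rw [Real.rpow_sub_one hx.ne']
    field_simp
    ring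
  · rw [add_sub_cancel, Real.div_rpow hy.le hx.le]
    have := (Real.rpow_pos_of_pos hx s).ne'
    field_simp

theorem bern_ge {s : ℝ} (h : 1 ≤ s ∨ s ≤ 0) : Bern 1 s := by
  intro x y hx hy
  obtain ⟨h1, h2⟩ := bern_id s hx hy
  rw [h1, h2, one_mul, one_mul]
  have hz : 0 < y / x := by positivity
  refine mul_le_mul_of_nonneg_left ?_ (by positivity)
  rcases h with h | h
  · exact one_add_mul_self_le_rpow_one_add (by linarith) h
  · rw [add_sub_cancel, Real.rpow_def_of_pos hz]
    have h3 := Real.add_one_le_exp (Real.log (y / x) * s)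
    have h4 := mul_le_mul_of_nonpos_right (Real.log_le_sub_one_of_pos hz) h
    linarith

theorem bern_le {s : ℝ} (h0 : 0 ≤ s) (h1 : s ≤ 1) : Bern (-1) s := by
  intro x y hx hy
  obtain ⟨h1', h2⟩ := bern_id s hx hy
  rw [h1', h2]
  have hz : 0 < y / x := by positivity
  have := mul_le_mul_of_nonneg_left (rpow_one_add_le_one_add_mul_self (s := y / x - 1)
    (by linarith) h0 h1) (Real.rpow_pos_of_pos hx s).le
  linarith

section p3
variable {n : Type*} [Fintype n] [DecidableEq n]

theorem tr_pw_mul {X : Matrix n n ℂ} (hX : X.PosDef) (s : ℝ) :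
    (trace (matPow X (s - 1) * X)).re = T X s := by
  nth_rw 2 [← pw_one hX]
  rw [pw_mul hX]; unfold T; congr 3; ring

theorem young {σ s : ℝ} (h : Bern σ s) {X Y : Matrix n n ℂ} (hX : X.PosDef) (hY : Y.PosDef) :
    σ * ((1 - s) * T X s + s * (trace (matPow X (s - 1) * Y)).re) ≤ σ * T Y s := by
  have e1 := dbl_pow hX hY 1 s 0
  have e2 := dbl_pow hX hY 1 (s - 1) 1
  have e3 := dbl_pow hX hY 1 0 s
  simp only [conjTranspose_one, Matrix.mul_one, Matrix.one_mul, pw_zero hX, pw_zero hY, pw_one hY] at e1 e2 e3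
  unfold T
  rw [← e1, ← e2, ← e3, ← dbl_smul, ← dbl_smul, ← dbl_add, ← dbl_smul, ← dbl_smul]
  apply dbl_mono
  intro a b ha hb
  simpa using h a b ha hb

theorem T_convex {γ : ℝ} (h : Bern 1 γ) {t : ℝ} (h0 : 0 ≤ t) (h1 : t ≤ 1) {X₀ X₁ : Matrix n n ℂ}
    (hX₀ : X₀.PosDef) (hX₁ : X₁.PosDef) :
    T (mix t X₀ X₁) γ ≤ t * T X₀ γ + (1 - t) * T X₁ γ := by
  have hX := mix_posDef h0 h1 hX₀ hX₁
  have y0 := mul_le_mul_of_nonneg_left (young h hX hX₀) h0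
  have y1 := mul_le_mul_of_nonneg_left (young h hX hX₁) (by linarith : 0 ≤ 1 - t)
  have e := tr_pw_mul hX γ
  have e2 := mix_tr t X₀ X₁ (matPow (mix t X₀ X₁) (γ - 1)) 1
  simp only [Matrix.mul_one] at e2
  rw [e] at e2
  have : γ * T (mix t X₀ X₁) γ = γ * (t * (trace (matPow (mix t X₀ X₁) (γ - 1) * X₀)).re +
    (1 - t) * (trace (matPow (mix t X₀ X₁) (γ - 1) * X₁)).re) := by rw [← e2]
  linarith

/-- signed trace property along a segment -/
def PropS (σ β t : ℝ) (M₀ Mt M₁ : Matrix n n ℂ) : Prop :=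
  ∀ (L X₀ X₁ : Matrix n n ℂ), X₀.PosDef → X₁.PosDef →
    σ * (trace (Lᴴ * Mt * L * matPow (mix t X₀ X₁) β)).re ≤
      t * (σ * (trace (Lᴴ * M₀ * L * matPow X₀ β)).re) +
      (1 - t) * (σ * (trace (Lᴴ * M₁ * L * matPow X₁ β)).re)

def Good (σ s t : ℝ) (M₀ Mt M₁ : Matrix n n ℂ) : Prop :=
  ∀ L : Matrix n n ℂ, IsUnit L →
    σ * T (Lᴴ * Mt * L) s ≤ t * (σ * T (Lᴴ * M₀ * L) s) + (1 - t) * (σ * T (Lᴴ * M₁ * L) s)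

theorem mix_self (t : ℝ) (A : Matrix n n ℂ) : mix t A A = A := by
  unfold mix
  rw [← add_smul]
  simp

theorem PropS.simple {σ β t s : ℝ} (h0 : 0 ≤ t) (h1 : t ≤ 1) {M₀ Mt M₁ : Matrix n n ℂ}
    (H : PropS σ β t M₀ Mt M₁) (hM₀ : M₀.PosDef) (hMt : Mt.PosDef) (hM₁ : M₁.PosDef)
    (hs : 0 ≤ s) (hB : Bern σ s) : Good σ s t M₀ Mt M₁ := by
  intro L hL
  have hN₀ := posDef_conj hM₀ hL
  have hN := posDef_conj hMt hL
  have hN₁ := posDef_conj hM₁ hL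
  have y0 := mul_le_mul_of_nonneg_left (young hB hN hN₀) h0
  have y1 := mul_le_mul_of_nonneg_left (young hB hN hN₁) (by linarith : 0 ≤ 1 - t)
  have e := tr_pw_mul hN s
  set W := matPow (Lᴴ * Mt * L) (s - 1) with hW
  set V := matPow (Lᴴ * Mt * L) ((s - 1) / 2) with hV
  have hVV : V * V = W := by rw [hV, hW, pw_mul hN]; congr 1; ring
  have hVh : Vᴴ = V := pw_herm hN _
  have key : ∀ M, (trace ((L * V)ᴴ * M * (L * V) * matPow (1 : Matrix n n ℂ) β)).re
     = (trace (W * (Lᴴ * M * L))).re := by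
    intro M
    rw [pw_onemat, Matrix.mul_one, conjTranspose_mul, hVh, ← hVV]
    congr 1
    calc _ = trace ((V * (Lᴴ * M * L)) * V) := by simp only [Matrix.mul_assoc]
      _ = _ := by rw [trace_mul_comm]; simp only [Matrix.mul_assoc]
  have p := H (L * V) 1 1 PosDef.one PosDef.one
  rw [mix_self, key, key, key, e] at p
  have := mul_le_mul_of_nonneg_left p hs
  linarith

theorem PropS.scheme {σ β t s : ℝ} (h0 : 0 ≤ t) (h1 : t ≤ 1) {M₀ Mt M₁ : Matrix n n ℂ}
    (H : PropS σ β t M₀ Mt M₁) (hM₀ : M₀.PosDef) (hMt : Mt.PosDef) (hM₁ : M₁.PosDef)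
    (hs : 0 ≤ s) (hs1 : s ≠ 1) (hB : Bern (-σ) s) (hσ : 0 ≤ σ * (1 - s)) (hβ : β ≠ 0)
    (hγ : Bern 1 (β * s / (s - 1))) : Good σ s t M₀ Mt M₁ := by
  intro L hL
  have hN₀ := posDef_conj hM₀ hL
  have hN := posDef_conj hMt hL
  have hN₁ := posDef_conj hM₁ hL
  have p := H L
  generalize Lᴴ * M₀ * L = N₀ at *
  generalize Lᴴ * M₁ * L = N₁ at *
  generalize Lᴴ * Mt * L = Nt at *
  have hs1' : s - 1 ≠ 0 := sub_ne_zero.mpr hs1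
  have hX₀ := pw_posDef hN₀ ((s - 1) / β)
  have hX₁ := pw_posDef hN₁ ((s - 1) / β)
  have e1 : ∀ {N : Matrix n n ℂ}, N.PosDef → T (matPow N ((s - 1) / β)) (β * s / (s - 1)) = T N s := by
    intro N hN
    unfold T
    rw [pw_pw hN]; congr 3; field_simp
  have e2 : ∀ {N : Matrix n n ℂ}, N.PosDef →
      (trace (N * matPow (matPow N ((s - 1) / β)) β)).re = T N s := by
    intro N hN
    rw [pw_pw hN, trace_mul_comm, ← tr_pw_mul hN]
    congr 4; field_simp
  have p := p _ _ hX₀ hX₁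
  rw [e2 hN₀, e2 hN₁] at p
  have c := T_convex hγ h0 h1 hX₀ hX₁
  rw [e1 hN₀, e1 hN₁] at c
  have hX := mix_posDef h0 h1 hX₀ hX₁
  set X := mix t (matPow N₀ ((s - 1) / β)) (matPow N₁ ((s - 1) / β))
  have y := young hB (pw_posDef hX (β / (s - 1))) hN
  have e3 : T (matPow X (β / (s - 1))) s = T X (β * s / (s - 1)) := by
    unfold T
    rw [pw_pw hX]; congr 3; ring
  have e4 : matPow (matPow X (β / (s - 1))) (s - 1) = matPow X β := by
    rw [pw_pw hX]; congr 1; field_simp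
  rw [e3, e4, trace_mul_comm] at y
  have := mul_le_mul_of_nonneg_left c hσ
  have := mul_le_mul_of_nonneg_left p hs
  linarith

theorem PropS.add {σ β t : ℝ} {M₀ Mt M₁ M₀' Mt' M₁' : Matrix n n ℂ}
    (H : PropS σ β t M₀ Mt M₁) (H' : PropS σ β t M₀' Mt' M₁') :
    PropS σ β t (M₀ + M₀') (Mt + Mt') (M₁ + M₁') := by
  intro L X₀ X₁ h0 h1
  have a := H L X₀ X₁ h0 h1
  have b := H' L X₀ X₁ h0 h1
  simp only [Matrix.mul_add, Matrix.add_mul, trace_add, Complex.add_re]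
  linarith

theorem PropS.zero {σ β t : ℝ} : PropS σ β t (0 : Matrix n n ℂ) 0 0 := by
  intro L X₀ X₁ h0 h1
  simp

theorem PropS.sum {ι : Type*} (S : Finset ι) {σ β t : ℝ} {M₀ Mt M₁ : ι → Matrix n n ℂ}
    (H : ∀ i, PropS σ β t (M₀ i) (Mt i) (M₁ i)) :
    PropS σ β t (∑ i ∈ S, M₀ i) (∑ i ∈ S, Mt i) (∑ i ∈ S, M₁ i) := by
  classical
  induction S using Finset.induction_on with
  | empty => simpa using PropS.zero
  | insert a S ha ih =>
    rw [Finset.sum_insert ha, Finset.sum_insert ha, Finset.sum_insert ha]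
    exact (H a).add ih

theorem PropS.base {m : Type*} [Fintype m] [DecidableEq m] {σ β t p : ℝ}
    (h0 : 0 ≤ t) (h1 : t ≤ 1) (H : JC m n (fun a b => σ * (a ^ p * b ^ β)))
    {A₀ A₁ : Matrix m m ℂ} (hA₀ : A₀.PosDef) (hA₁ : A₁.PosDef) (K : Matrix m n ℂ) :
    PropS σ β t (Kᴴ * matPow A₀ p * K) (Kᴴ * matPow (mix t A₀ A₁) p * K)
      (Kᴴ * matPow A₁ p * K) := by
  intro L X₀ X₁ hX₀ hX₁
  have := H _ _ hA₀ hA₁ _ _ hX₀ hX₁ (K * L) t h0 h1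
  simp only [dbl_smul, dbl_pow] at this
  have e : ∀ (P : Matrix m m ℂ) (Q : Matrix n n ℂ), trace (P * (K * L) * Q * (K * L)ᴴ)
    = trace (Lᴴ * (Kᴴ * P * K) * L * Q) := by
    intro P Q
    rw [trace_mul_comm, conjTranspose_mul]; simp only [Matrix.mul_assoc]
  simpa only [e] using this

/-- the basic family -/
noncomputable def Mf {ι m : Type*} [Fintype ι] [Fintype m] [DecidableEq m] (K : ι → Matrix m n ℂ)
    (p ε : ℝ) (A : Matrix m m ℂ) : Matrix n n ℂ :=
  ∑ i, (K i)ᴴ * matPow A p * K i + (ε : ℂ) • (1 : Matrix n n ℂ)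

theorem PropS.mf {ι m : Type*} [Fintype ι] [Fintype m] [DecidableEq m] {σ β t p ε : ℝ}
    (h0 : 0 ≤ t) (h1 : t ≤ 1) (H : JC m n (fun a b => σ * (a ^ p * b ^ β)))
    (H' : JC n n (fun a b => σ * (a ^ p * b ^ β))) (hε : 0 ≤ ε)
    {A₀ A₁ : Matrix m m ℂ} (hA₀ : A₀.PosDef) (hA₁ : A₁.PosDef) (K : ι → Matrix m n ℂ) :
    PropS σ β t (Mf K p ε A₀) (Mf K p ε (mix t A₀ A₁)) (Mf K p ε A₁) := by
  unfold Mf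
  refine PropS.add (PropS.sum _ fun i => PropS.base h0 h1 H hA₀ hA₁ (K i)) ?_
  have := PropS.base h0 h1 H' (PosDef.one (n := n) (R := ℂ)) PosDef.one
    (((Real.sqrt ε : ℝ) : ℂ) • (1 : Matrix n n ℂ))
  rw [mix_self, pw_onemat] at this
  have e : (((Real.sqrt ε : ℝ) : ℂ) • (1 : Matrix n n ℂ))ᴴ * 1 * (((Real.sqrt ε : ℝ) : ℂ) • (1 : Matrix n n ℂ))
     = (ε : ℂ) • (1 : Matrix n n ℂ) := by
    simp only [conjTranspose_smul, conjTranspose_one, Matrix.mul_one, Matrix.smul_mul,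
      Matrix.mul_smul, smul_smul, Complex.star_def, Complex.conj_ofReal]
    rw [← Complex.ofReal_mul, Real.mul_self_sqrt hε]
  rwa [e] at this

theorem mf_posDef {ι m : Type*} [Fintype ι] [Fintype m] [DecidableEq m] {p ε : ℝ} (hε : 0 < ε)
    {A : Matrix m m ℂ} (hA : A.PosDef) (K : ι → Matrix m n ℂ) : (Mf K p ε A).PosDef := by
  unfold Mf
  refine PosDef.posSemidef_add ?_ (PosDef.one.smul (by exact_mod_cast hε))
  refine posSemidef_sum _ fun i _ => ?_
  exact (pw_posDef hA p).posSemidef.conjTranspose_mul_mul_same (K i)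

theorem Good.E {p s t : ℝ} (hp : 0 < p) (hp1 : p ≤ 1) (hs : 0 < s) (hsp : s ≤ 1 / p)
    (h0 : 0 ≤ t) (h1 : t ≤ 1) {M₀ Mt M₁ : Matrix n n ℂ}
    (H : PropS (-1) (1 - p) t M₀ Mt M₁) (hM₀ : M₀.PosDef) (hMt : Mt.PosDef) (hM₁ : M₁.PosDef) :
    Good (-1) s t M₀ Mt M₁ := by
  rcases le_or_gt s 1 with h | h
  · exact H.simple h0 h1 hM₀ hMt hM₁ hs.le (bern_le hs.le h)
  · rw [le_div_iff₀ hp] at hsp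
    have hp' : p < 1 := by nlinarith
    refine H.scheme h0 h1 hM₀ hMt hM₁ hs.le h.ne' (by rw [neg_neg]; exact bern_ge (Or.inl h.le))
      (by linarith) (by linarith) (bern_ge (Or.inl ?_))
    rw [le_div_iff₀ (by linarith)]
    linarith

theorem Good.C3 {p s t : ℝ} (hp : 1 ≤ p) (hp1 : p ≤ 2) (hsp : 1 / p ≤ s)
    (h0 : 0 ≤ t) (h1 : t ≤ 1) {M₀ Mt M₁ : Matrix n n ℂ}
    (H : PropS 1 (1 - p) t M₀ Mt M₁) (hM₀ : M₀.PosDef) (hMt : Mt.PosDef) (hM₁ : M₁.PosDef) :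
    Good 1 s t M₀ Mt M₁ := by
  have hs : 0 < s := lt_of_lt_of_le (by positivity) hsp
  rcases le_or_gt 1 s with h | h
  · exact H.simple h0 h1 hM₀ hMt hM₁ hs.le (bern_ge (Or.inl h))
  · rw [div_le_iff₀ (by linarith)] at hsp
    have hp' : 1 < p := by nlinarith
    refine H.scheme h0 h1 hM₀ hMt hM₁ hs.le h.ne (bern_le hs.le h.le)
      (by linarith) (by linarith) (bern_ge (Or.inl ?_))
    rw [le_div_iff_of_neg (by linarith)]
    linarith

theorem Good.C2 {s t : ℝ} (hs : 0 < s)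
    (h0 : 0 ≤ t) (h1 : t ≤ 1) {M₀ Mt M₁ : Matrix n n ℂ}
    (H : PropS 1 2 t M₀ Mt M₁) (hM₀ : M₀.PosDef) (hMt : Mt.PosDef) (hM₁ : M₁.PosDef) :
    Good 1 s t M₀ Mt M₁ := by
  rcases le_or_gt 1 s with h | h
  · exact H.simple h0 h1 hM₀ hMt hM₁ hs.le (bern_ge (Or.inl h))
  · refine H.scheme h0 h1 hM₀ hMt hM₁ hs.le h.ne (bern_le hs.le h.le)
      (by linarith) (by norm_num) (bern_ge (Or.inr ?_))
    exact div_nonpos_of_nonneg_of_nonpos (by linarith) (by linarith)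

/-- E for a power of a positive definite matrix -/
theorem Good.pw {p s t : ℝ} (hp : 0 < p) (hp1 : p ≤ 1) (hs : 0 < s) (hsp : s ≤ 1 / p)
    (h0 : 0 ≤ t) (h1 : t ≤ 1) {A₀ A₁ : Matrix n n ℂ} (hA₀ : A₀.PosDef) (hA₁ : A₁.PosDef) :
    Good (-1) s t (matPow A₀ p) (matPow (mix t A₀ A₁) p) (matPow A₁ p) := by
  have := PropS.base (n := n) h0 h1 (σ := -1) (((JC.lieb hp hp1)).congr (by intros; ring)) hA₀ hA₁ 1
  simp only [conjTranspose_one, Matrix.mul_one, Matrix.one_mul] at this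
  exact Good.E hp hp1 hs hsp h0 h1 this (pw_posDef hA₀ _) (pw_posDef (mix_posDef h0 h1 hA₀ hA₁) _)
    (pw_posDef hA₁ _)

end p3

section p4
variable {n : Type*} [Fintype n] [DecidableEq n]

theorem unit_of {A B : Matrix n n ℂ} (h : A * B = 1) : IsUnit A :=
  IsUnit.of_mul_eq_one B h

theorem T_swap2 {P R S : Matrix n n ℂ} (hP : P.PosDef) (hR : IsUnit R) (hS : IsUnit S)
    (h : R * Rᴴ = S * Sᴴ) (s : ℝ) : T (Rᴴ * P * R) s = T (Sᴴ * P * S) s := by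
  have key : ∀ {Y : Matrix n n ℂ}, IsUnit Y →
      T (Yᴴ * P * Y) s = T (matPow P (1/2) * (Y * Yᴴ) * matPow P (1/2)) s := by
    intro Y hY
    have := T_swap ((pw_unit hP (1/2)).mul hY) s
    rw [conjTranspose_mul, pw_herm hP] at this
    have e : Yᴴ * matPow P (1/2) * (matPow P (1/2) * Y) = Yᴴ * P * Y := by
      calc _ = Yᴴ * (matPow P (1/2) * matPow P (1/2)) * Y := by simp only [Matrix.mul_assoc]
        _ = _ := by rw [pw_mul hP, add_halves, pw_one hP]
    rw [e] at this
    rw [this]; simp only [Matrix.mul_assoc]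
  rw [key hR, key hS, h]

theorem pinch {d : n → ℝ} (hd : ∀ i, 0 < d i) {a s : ℝ} (ha : 0 < a) (ha1 : a ≤ 1) (hs : 0 < s)
    (hsa : s ≤ 1 / a) {X : Matrix n n ℂ} (hX : X.PosDef) (S : Finset n) :
    ∃ Y : Matrix n n ℂ, Y.PosDef ∧
      T ((diagonal fun i => (d i : ℂ))ᴴ * matPow X a * diagonal fun i => (d i : ℂ)) s ≤
      T ((diagonal fun i => (d i : ℂ))ᴴ * matPow Y a * diagonal fun i => (d i : ℂ)) s ∧
      (∀ i, Y i i = X i i) ∧ ∀ i ∈ S, ∀ j, j ≠ i → Y i j = 0 ∧ Y j i = 0 := by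
  set D := diagonal fun i => (d i : ℂ) with hD
  have hDu : IsUnit D := by
    apply unit_of (B := diagonal fun i => ((d i)⁻¹ : ℂ))
    rw [hD, diagonal_mul_diagonal, ← diagonal_one]
    congr 1
    ext i
    exact mul_inv_cancel₀ (by exact_mod_cast (hd i).ne')
  induction S using Finset.induction_on with
  | empty => exact ⟨X, hX, le_rfl, fun _ => rfl, by simp⟩
  | insert k S hk ih =>
    obtain ⟨Y, hY, hle, hdg, hof⟩ := ih
    set σ : n → ℂ := fun i => if i = k then -1 else 1 with hσ
    set V := diagonal σ with hV
    have hVh : Vᴴ = V := by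
      rw [hV, diagonal_conjTranspose]
      congr 1
      ext i
      simp only [hσ, Pi.star_apply]
      split_ifs <;> simp
    have hVV : V * V = 1 := by
      rw [hV, diagonal_mul_diagonal, ← diagonal_one]
      congr 1
      ext i
      simp only [hσ]
      split_ifs <;> simp
    have hl : Vᴴ * V = 1 := by rw [hVh, hVV]
    have hr : V * Vᴴ = 1 := by rw [hVh, hVV]
    have hVu := unit_of hr
    have hY' := posDef_conj' hY hVu
    have hVD : V * D = D * V := by
      rw [hV, hD, diagonal_mul_diagonal, diagonal_mul_diagonal]
      congr 1; ext i; ring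
    have hDh : Dᴴ = D := by
      rw [hD, diagonal_conjTranspose]
      congr 1; ext i; simp
    have hent : ∀ i j, (mix (1/2) Y (V * Y * Vᴴ)) i j = (1 + σ i * σ j) / 2 * Y i j := by
      intro i j
      rw [hVh]
      simp only [mix, hV, Matrix.add_apply, Matrix.smul_apply, smul_eq_mul, mul_diagonal, diagonal_mul]
      push_cast
      ring
    refine ⟨mix (1/2) Y (V * Y * Vᴴ), mix_posDef (by norm_num) (by norm_num) hY hY', ?_, ?_, ?_⟩
    · refine hle.trans ?_
      have g := Good.pw ha ha1 hs hsa (by norm_num : (0:ℝ) ≤ 1/2) (by norm_num) hY hY' D hDu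
      have e : T (Dᴴ * matPow (V * Y * Vᴴ) a * D) s = T (Dᴴ * matPow Y a * D) s := by
        rw [pw_conj hY hl hr, ← T_conj (posDef_conj (pw_posDef hY a) hDu) hl hr]
        congr 1
        rw [hVh, hDh]
        calc _ = (D * V) * matPow Y a * (V * D) := by simp only [Matrix.mul_assoc]
          _ = _ := by rw [hVD, ← hVD]; simp only [Matrix.mul_assoc]; rw [hVD]
      rw [e] at g
      linarith
    · intro i
      rw [hent, hdg]
      simp only [hσ]
      split_ifs <;> norm_num
    · intro i hi j hj
      rw [hent, hent]
      rcases Finset.mem_insert.mp hi with rfl | hi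
      · simp [hσ, hj]
      · have := hof i hi j hj
        simp [this.1, this.2]

theorem holder {s0 s1 s2 : ℝ} (h0 : 0 < s0) (h1 : 1 ≤ s1) (h2 : 0 < s2)
    (h : s0 / s1 + s0 / s2 = 1) {P Y : Matrix n n ℂ} (hP : P.PosDef) (hY : IsUnit Y) :
    T (Yᴴ * P * Y) s0 ≤ s0 / s1 * T P s1 + s0 / s2 * T (Y * Yᴴ) s2 := by
  have hs1 : 0 < s1 := by linarith
  have hQ : (Y * Yᴴ).PosDef := by simpa using posDef_conj' (PosDef.one (n := n) (R := ℂ)) hY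
  obtain ⟨V, q, hV, hq⟩ := Sp.exists_pos hQ
  have hQs : T (Y * Yᴴ) s2 = ∑ i, q i ^ s2 := by
    unfold T
    rw [hV.pw hq, trace_mul_comm, ← Matrix.mul_assoc, hV.l, Matrix.one_mul, trace_diagonal,
      Complex.re_sum]
    simp only [Complex.ofReal_re]
  set D := diagonal fun i => ((Real.sqrt (q i) : ℝ) : ℂ) with hD
  have hDh : Dᴴ = D := by
    rw [hD, diagonal_conjTranspose]
    congr 1; ext i; simp
  have hDD : D * D = diagonal fun i => (q i : ℂ) := by
    rw [hD, diagonal_mul_diagonal]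
    congr 1; ext i
    rw [← Complex.ofReal_mul, Real.mul_self_sqrt (hq i).le]
  have hDu : IsUnit D := by
    apply unit_of (B := diagonal fun i => (((Real.sqrt (q i) : ℝ) : ℂ)⁻¹))
    rw [hD, diagonal_mul_diagonal, ← diagonal_one]
    congr 1
    ext i
    exact mul_inv_cancel₀ (by exact_mod_cast (Real.sqrt_pos.mpr (hq i)).ne')
  have hVu : IsUnit V := unit_of hV.r
  have e1 : T (Yᴴ * P * Y) s0 = T ((V * D)ᴴ * P * (V * D)) s0 := by
    apply T_swap2 hP hY (hVu.mul hDu)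
    rw [conjTranspose_mul, hDh]
    calc _ = V * (D * D) * Vᴴ := by rw [hDD]; exact hV.eq
      _ = _ := by simp only [Matrix.mul_assoc]
  set X := Vᴴ * matPow P s1 * V with hX
  have hXp : X.PosDef := posDef_conj (pw_posDef hP _) hVu
  have e2 : matPow X (1 / s1) = Vᴴ * P * V := by
    have := pw_conj (pw_posDef hP s1) (V := Vᴴ) (by simpa using hV.r) (by simpa using hV.l) (1 / s1)
    rw [conjTranspose_conjTranspose, pw_pw hP, mul_one_div_cancel hs1.ne', pw_one hP] at this
    exact this
  have e3 : (V * D)ᴴ * P * (V * D) = Dᴴ * matPow X (1 / s1) * D := by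
    rw [e2, conjTranspose_mul]; simp only [Matrix.mul_assoc]
  have e4 : T P s1 = ∑ i, (X i i).re := by
    unfold T
    rw [← Complex.re_sum]
    change _ = (trace X).re
    rw [hX, trace_mul_comm, ← Matrix.mul_assoc, hV.r, Matrix.one_mul]
  have hs01 : s0 ≤ s1 := by
    have : s0 / s1 ≤ 1 := by have := div_pos h0 h2; linarith
    rwa [div_le_one hs1] at this
  obtain ⟨Z, hZ, hle, hdg, hof⟩ := pinch (d := fun i => Real.sqrt (q i))
    (fun i => Real.sqrt_pos.mpr (hq i)) (a := 1 / s1) (s := s0) (by positivity)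
    (by rw [div_le_one hs1]; exact h1) h0 (by simpa using hs01) hXp Finset.univ
  have hx : ∀ i, 0 < (X i i).re := fun i => (Complex.pos_iff.mp (hXp.diag_pos (i := i))).1
  have hZd : Z = diagonal fun i => (((X i i).re : ℝ) : ℂ) := by
    ext i j
    by_cases hij : i = j
    · subst hij
      rw [diagonal_apply_eq, hdg]
      have := (Complex.pos_iff.mp (hXp.diag_pos (i := i))).2
      apply Complex.ext <;> simp [← this]
    · rw [diagonal_apply_ne _ hij]
      exact (hof i (Finset.mem_univ _) j (Ne.symm hij)).1
  rw [e1, e3]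
  refine hle.trans ?_
  rw [hZd, pw_diag _ hx, ← hD, hDh, hD, diagonal_mul_diagonal, diagonal_mul_diagonal]
  have e5 : (fun i => ((Real.sqrt (q i) : ℝ) : ℂ) * (((X i i).re ^ (1 / s1) : ℝ) : ℂ) *
      ((Real.sqrt (q i) : ℝ) : ℂ)) = fun i => ((q i * (X i i).re ^ (1 / s1) : ℝ) : ℂ) := by
    ext i
    rw [← Complex.ofReal_mul, ← Complex.ofReal_mul]
    congr 1
    have := Real.mul_self_sqrt (hq i).le
    linear_combination (X i i).re ^ (1 / s1) * this
  rw [e5]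
  unfold T at *
  rw [pw_diag _ (fun i => mul_pos (hq i) (Real.rpow_pos_of_pos (hx i) _)), trace_diagonal,
    Complex.re_sum, e4, hQs, Finset.mul_sum, Finset.mul_sum, ← Finset.sum_add_distrib]
  refine Finset.sum_le_sum fun i _ => ?_
  have := Real.geom_mean_le_arith_mean2_weighted (w₁ := s0 / s1) (w₂ := s0 / s2) (by positivity)
    (by positivity) (hx i).le (Real.rpow_pos_of_pos (hq i) s2).le h
  refine le_trans (le_of_eq ?_) this
  rw [Complex.ofReal_re, Real.mul_rpow (hq i).le (Real.rpow_pos_of_pos (hx i) _).le,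
    ← Real.rpow_mul (hx i).le, ← Real.rpow_mul (hq i).le, mul_comm]
  congr 2 <;> field_simp

end p4

section p5
variable {n : Type*} [Fintype n] [DecidableEq n]

theorem pw_inv_mul {B : Matrix n n ℂ} (hB : B.PosDef) (a b : ℝ) (h : a + b = 0) :
    matPow B a * matPow B b = 1 := by
  rw [pw_mul hB, h, pw_zero hB]

theorem sand_posDef {M B : Matrix n n ℂ} (hM : M.PosDef) (hB : B.PosDef) (a : ℝ) :
    (matPow B a * M * matPow B a).PosDef := by
  have := posDef_conj hM (pw_unit hB a)
  rwa [pw_herm hB] at this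

theorem T_pw {N : Matrix n n ℂ} (hN : N.PosDef) {a b c : ℝ} (h : a * b = c) :
    T (matPow N a) b = T N c := by
  unfold T
  rw [pw_pw hN, h]

theorem sand_pow {N : Matrix n n ℂ} (hN : N.PosDef) (a b : ℝ) (h : a + 1 + a = b) :
    matPow N a * N * matPow N a = matPow N b := by
  nth_rw 2 [← pw_one hN]
  rw [pw_mul hN, pw_mul hN, h]

theorem holdA {p q s : ℝ} (hp : 0 < p) (hp1 : p ≤ 1) (hs : 0 < s) (hsp : s * p < 1)
    {M B Z W : Matrix n n ℂ} (hM : M.PosDef) (hB : B.PosDef) (hZW : Z * W = 1) :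
    T (matPow B (q / 2) * M * matPow B (q / 2)) s ≤
      s * p * T (Zᴴ * M * Z) (1 / p) + (1 - s * p) * T (W * matPow B q * Wᴴ) (s / (1 - s * p)) := by
  have hZ : IsUnit Z := unit_of hZW
  have hW : IsUnit W := unit_of (mul_eq_one_comm.mp hZW)
  have h1 : 0 < 1 - s * p := by linarith
  have e1 : s / (1 / p) = s * p := by field_simp
  have e2 : s / (s / (1 - s * p)) = 1 - s * p := by field_simp
  have := holder hs (s1 := 1 / p) (s2 := s / (1 - s * p)) (by rw [le_div_iff₀ hp]; linarith)
    (by positivity) (by rw [e1, e2]; ring) (posDef_conj hM hZ) (hW.mul (pw_unit hB (q / 2)))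
  rw [e1, e2] at this
  have f1 : (W * matPow B (q / 2))ᴴ * (Zᴴ * M * Z) * (W * matPow B (q / 2))
      = matPow B (q / 2) * M * matPow B (q / 2) := by
    rw [conjTranspose_mul, pw_herm hB]
    calc _ = matPow B (q / 2) * (Z * W)ᴴ * M * (Z * W) * matPow B (q / 2) := by
          rw [conjTranspose_mul]; simp only [Matrix.mul_assoc]
      _ = _ := by rw [hZW]; simp
  have f2 : (W * matPow B (q / 2)) * (W * matPow B (q / 2))ᴴ = W * matPow B q * Wᴴ := by
    rw [conjTranspose_mul, pw_herm hB]
    calc _ = W * (matPow B (q / 2) * matPow B (q / 2)) * Wᴴ := by simp only [Matrix.mul_assoc]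
      _ = _ := by rw [pw_mul hB, add_halves]
  rwa [f1, f2] at this

theorem jointA {p q s t : ℝ} (hp : 0 < p) (hp1 : p ≤ 1) (hq : 0 < q) (hq1 : q ≤ 1) (hs : 0 < s)
    (hspq : s * (p + q) ≤ 1) (h0 : 0 ≤ t) (h1 : t ≤ 1)
    {M₀ Mt M₁ B₀ B₁ : Matrix n n ℂ} (hM₀ : M₀.PosDef) (hMt : Mt.PosDef) (hM₁ : M₁.PosDef)
    (hB₀ : B₀.PosDef) (hB₁ : B₁.PosDef) (G : Good (-1) (1 / p) t M₀ Mt M₁) :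
    t * T (matPow B₀ (q / 2) * M₀ * matPow B₀ (q / 2)) s +
      (1 - t) * T (matPow B₁ (q / 2) * M₁ * matPow B₁ (q / 2)) s ≤
    T (matPow (mix t B₀ B₁) (q / 2) * Mt * matPow (mix t B₀ B₁) (q / 2)) s := by
  have hB := mix_posDef h0 h1 hB₀ hB₁
  have hsq : 0 < s * q := by positivity
  have hsp : s * p < 1 := by linarith
  have hx : 0 < 1 - s * p := by linarith
  have hs2 : s / (1 - s * p) ≤ 1 / q := by
    rw [div_le_div_iff₀ hx hq]; linarith
  have G2 := Good.pw hq hq1 (div_pos hs hx) hs2 h0 h1 hB₀ hB₁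
  set B := mix t B₀ B₁
  have hN := sand_posDef hMt hB (q / 2)
  set N := matPow B (q / 2) * Mt * matPow B (q / 2) with hNd
  set c := (1 - s * p) / 2 with hc
  set Z := matPow B (q / 2) * matPow N (-c) with hZ
  set W := matPow N c * matPow B (-(q / 2)) with hW
  have hZW : Z * W = 1 := by
    calc Z * W = matPow B (q / 2) * (matPow N (-c) * matPow N c) * matPow B (-(q / 2)) := by
          rw [hZ, hW]; simp only [Matrix.mul_assoc]
      _ = 1 := by
        rw [pw_inv_mul hN _ _ (by ring), Matrix.mul_one, pw_inv_mul hB _ _ (by ring)]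
  have hZu : IsUnit Z := unit_of hZW
  have hWu : IsUnit Wᴴ := by
    have : IsUnit W := unit_of (mul_eq_one_comm.mp hZW)
    simpa using this.star
  have e1 : Zᴴ * Mt * Z = matPow N (s * p) := by
    rw [hZ, conjTranspose_mul, pw_herm hB, pw_herm hN]
    calc _ = matPow N (-c) * N * matPow N (-c) := by rw [hNd]; simp only [Matrix.mul_assoc]
      _ = _ := sand_pow hN _ _ (by rw [hc]; ring)
  have e2 : W * matPow B q * Wᴴ = matPow N (1 - s * p) := by
    rw [hW, conjTranspose_mul, pw_herm hB, pw_herm hN]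
    calc _ = matPow N c * (matPow B (-(q / 2)) * matPow B q * matPow B (-(q / 2))) * matPow N c := by
          simp only [Matrix.mul_assoc]
      _ = _ := by
        rw [pw_mul hB, pw_inv_mul hB _ _ (by ring), Matrix.mul_one, pw_mul hN]
        congr 1; rw [hc]; ring
  have g1 := G Z hZu
  have g2 := G2 Wᴴ hWu
  rw [conjTranspose_conjTranspose, e2, T_pw hN (c := s) (by field_simp)] at g2
  rw [e1, T_pw hN (c := s) (by field_simp)] at g1
  have a0 := mul_le_mul_of_nonneg_left (holdA (q := q) hp hp1 hs hsp hM₀ hB₀ hZW) h0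
  have a1 := mul_le_mul_of_nonneg_left (holdA (q := q) hp hp1 hs hsp hM₁ hB₁ hZW)
    (by linarith : 0 ≤ 1 - t)
  have g1' := mul_le_mul_of_nonneg_left g1 (by positivity : 0 ≤ s * p)
  have g2' := mul_le_mul_of_nonneg_left g2 hx.le
  linarith

theorem holdB {q s : ℝ} (hq : q < 0) (hq1 : -1 ≤ q) (hs : 0 < s)
    {M B Z : Matrix n n ℂ} (hM : M.PosDef) (hB : B.PosDef) (hZ : IsUnit Z) :
    (1 - s * q) * T (Zᴴ * M * Z) (s / (1 - s * q)) + s * q * T (Zᴴ * matPow B (-q) * Z) (1 / (-q))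
      ≤ T (matPow B (q / 2) * M * matPow B (q / 2)) s := by
  obtain ⟨r, rfl⟩ : ∃ r, q = -r := ⟨-q, by ring⟩
  have hr : 0 < r := by linarith
  rw [neg_neg, show 1 - s * -r = 1 + s * r by ring]
  have hx : 0 < 1 + s * r := by positivity
  have hN := sand_posDef hM hB (-r / 2)
  set N := matPow B (-r / 2) * M * matPow B (-r / 2) with hNd
  set R := matPow B (r / 2) with hR
  have hRh : Rᴴ = R := pw_herm hB _
  have hRu : IsUnit R := pw_unit hB _
  have hMN : M = R * N * R := by
    calc M = (R * matPow B (-r / 2)) * M * (matPow B (-r / 2) * R) := by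
          rw [hR, pw_inv_mul hB _ _ (by ring), pw_inv_mul hB _ _ (by ring)]; simp
      _ = _ := by rw [hNd]; simp only [Matrix.mul_assoc]
  have hRZ : IsUnit (R * Z) := hRu.mul hZ
  have hP : ((R * Z) * (R * Z)ᴴ).PosDef := by
    simpa using posDef_conj' (PosDef.one (n := n) (R := ℂ)) hRZ
  have e1 : s / (1 + s * r) / (1 / r) = s * r / (1 + s * r) := by field_simp
  have e2 : s / (1 + s * r) / s = 1 / (1 + s * r) := by field_simp
  have := holder (s0 := s / (1 + s * r)) (s1 := 1 / r) (s2 := s) (by positivity)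
    (by rw [le_div_iff₀ hr]; linarith) hs (by rw [e1, e2]; field_simp; ring) hP (pw_unit hN (1/2))
  rw [e1, e2, pw_herm hN, pw_mul hN, add_halves, pw_one hN, ← T_swap hRZ] at this
  have e3 : (R * Z)ᴴ * (R * Z) = Zᴴ * matPow B r * Z := by
    rw [conjTranspose_mul, hRh]
    calc _ = Zᴴ * (R * R) * Z := by simp only [Matrix.mul_assoc]
      _ = _ := by rw [hR, pw_mul hB, add_halves]
  have e4 : T (matPow N (1/2) * (R * Z * (R * Z)ᴴ) * matPow N (1/2)) (s / (1 + s * r))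
      = T (Zᴴ * M * Z) (s / (1 + s * r)) := by
    have := T_swap ((pw_unit hN (1/2)).mul hRZ) (s / (1 + s * r))
    rw [conjTranspose_mul, pw_herm hN] at this
    have h1 : (R * Z)ᴴ * matPow N (1/2) * (matPow N (1/2) * (R * Z)) = Zᴴ * M * Z := by
      calc _ = (R * Z)ᴴ * (matPow N (1/2) * matPow N (1/2)) * (R * Z) := by
            simp only [Matrix.mul_assoc]
        _ = _ := by
          rw [pw_mul hN, add_halves, pw_one hN, conjTranspose_mul, hRh, hMN]
          simp only [Matrix.mul_assoc]
    rw [h1] at this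
    rw [this]; simp only [Matrix.mul_assoc]
  rw [e3, e4] at this
  have := mul_le_mul_of_nonneg_left this hx.le
  have e5 : (1 + s * r) * (s * r / (1 + s * r) * T (Zᴴ * matPow B r * Z) (1 / r) +
      1 / (1 + s * r) * T N s) = s * r * T (Zᴴ * matPow B r * Z) (1 / r) + T N s := by
    field_simp
  rw [e5] at this
  linarith

theorem jointB {q s t : ℝ} (hq : q < 0) (hq1 : -1 ≤ q) (hs : 0 < s)
    (h0 : 0 ≤ t) (h1 : t ≤ 1)
    {M₀ Mt M₁ B₀ B₁ : Matrix n n ℂ} (hM₀ : M₀.PosDef) (hMt : Mt.PosDef) (hM₁ : M₁.PosDef)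
    (hB₀ : B₀.PosDef) (hB₁ : B₁.PosDef) (G : Good 1 (s / (1 - s * q)) t M₀ Mt M₁) :
    T (matPow (mix t B₀ B₁) (q / 2) * Mt * matPow (mix t B₀ B₁) (q / 2)) s ≤
    t * T (matPow B₀ (q / 2) * M₀ * matPow B₀ (q / 2)) s +
      (1 - t) * T (matPow B₁ (q / 2) * M₁ * matPow B₁ (q / 2)) s := by
  have hB := mix_posDef h0 h1 hB₀ hB₁
  have hsq : s * q < 0 := mul_neg_of_pos_of_neg hs hq
  have hx : 0 < 1 - s * q := by linarith
  have G2 := Good.pw (p := -q) (s := 1 / (-q)) (by linarith) (by linarith)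
    (by rw [one_div, inv_pos]; linarith) le_rfl h0 h1 hB₀ hB₁
  set B := mix t B₀ B₁
  have hN := sand_posDef hMt hB (q / 2)
  set N := matPow B (q / 2) * Mt * matPow B (q / 2) with hNd
  set c := -(s * q) / 2 with hc
  set Z := matPow B (q / 2) * matPow N c with hZ
  have hZu : IsUnit Z := (pw_unit hB _).mul (pw_unit hN _)
  have e1 : Zᴴ * Mt * Z = matPow N (1 - s * q) := by
    rw [hZ, conjTranspose_mul, pw_herm hB, pw_herm hN]
    calc _ = matPow N c * N * matPow N c := by rw [hNd]; simp only [Matrix.mul_assoc]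
      _ = _ := sand_pow hN _ _ (by rw [hc]; ring)
  have e2 : Zᴴ * matPow B (-q) * Z = matPow N (-(s * q)) := by
    rw [hZ, conjTranspose_mul, pw_herm hB, pw_herm hN]
    calc _ = matPow N c * (matPow B (q / 2) * matPow B (-q) * matPow B (q / 2)) * matPow N c := by
          simp only [Matrix.mul_assoc]
      _ = _ := by
        rw [pw_mul hB, pw_inv_mul hB _ _ (by ring), Matrix.mul_one, pw_mul hN]
        congr 1; rw [hc]; ring
  have g1 := G Z hZu
  have g2 := G2 Z hZu
  rw [e1, T_pw hN (c := s) (by field_simp)] at g1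
  rw [e2, T_pw hN (c := s) (by have := hq.ne; field_simp)] at g2
  have a0 := mul_le_mul_of_nonneg_left (holdB hq hq1 hs hM₀ hB₀ hZu) h0
  have a1 := mul_le_mul_of_nonneg_left (holdB hq hq1 hs hM₁ hB₁ hZu)
    (by linarith : 0 ≤ 1 - t)
  have g1' := mul_le_mul_of_nonneg_left g1 hx.le
  have g2' := mul_le_mul_of_nonneg_left g2 (by linarith : 0 ≤ -(s * q))
  linarith

theorem joint0 {σ s t : ℝ} {M₀ Mt M₁ B₀ B B₁ : Matrix n n ℂ}
    (hB₀ : B₀.PosDef) (hB : B.PosDef) (hB₁ : B₁.PosDef) (G : Good σ s t M₀ Mt M₁) :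
    σ * T (matPow B ((0:ℝ) / 2) * Mt * matPow B ((0:ℝ) / 2)) s ≤
    t * (σ * T (matPow B₀ ((0:ℝ) / 2) * M₀ * matPow B₀ ((0:ℝ) / 2)) s) +
      (1 - t) * (σ * T (matPow B₁ ((0:ℝ) / 2) * M₁ * matPow B₁ ((0:ℝ) / 2)) s) := by
  rw [zero_div, pw_zero hB, pw_zero hB₀, pw_zero hB₁]
  simpa using G 1 isUnit_one

variable {ι m : Type*} [Fintype ι] [Fintype m] [DecidableEq m]

theorem eps1 (K : ι → Matrix m n ℂ) {p q s ε t : ℝ} (hq : 0 ≤ q) (hqp : q ≤ p) (hp : p ≤ 1)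
    (hs : 0 < s) (hspq : s ≤ 1 / (p + q)) (hε : 0 < ε)
    {A₀ A₁ : Matrix m m ℂ} (hA₀ : A₀.PosDef) (hA₁ : A₁.PosDef)
    {B₀ B₁ : Matrix n n ℂ} (hB₀ : B₀.PosDef) (hB₁ : B₁.PosDef) (h0 : 0 ≤ t) (h1 : t ≤ 1) :
    t * T (matPow B₀ (q / 2) * Mf K p ε A₀ * matPow B₀ (q / 2)) s +
      (1 - t) * T (matPow B₁ (q / 2) * Mf K p ε A₁ * matPow B₁ (q / 2)) s ≤
    T (matPow (mix t B₀ B₁) (q / 2) * Mf K p ε (mix t A₀ A₁) * matPow (mix t B₀ B₁) (q / 2)) s := by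
  have hp0 : 0 < p := by
    rcases (hq.trans hqp).eq_or_lt with h | h
    · have : q = 0 := by linarith
      subst this; subst h
      norm_num at hspq; linarith
    · exact h
  have hspq' : s * (p + q) ≤ 1 := by rwa [le_div_iff₀ (by linarith)] at hspq
  have hM₀ := mf_posDef (p := p) hε hA₀ K
  have hM₁ := mf_posDef (p := p) hε hA₁ K
  have hM := mf_posDef (p := p) hε (mix_posDef h0 h1 hA₀ hA₁) K
  have P : PropS (-1) (1 - p) t (Mf K p ε A₀) (Mf K p ε (mix t A₀ A₁)) (Mf K p ε A₁) :=
    PropS.mf h0 h1 ((JC.lieb hp0 hp).congr (by intros; ring))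
      ((JC.lieb hp0 hp).congr (by intros; ring)) hε.le hA₀ hA₁ K
  rcases hq.eq_or_lt with rfl | hq
  · have := joint0 hB₀ (mix_posDef h0 h1 hB₀ hB₁) hB₁
      (Good.E hp0 hp hs (by simpa using hspq) h0 h1 P hM₀ hM hM₁)
    linarith
  · exact jointA hp0 hp hq (hqp.trans hp) hs hspq' h0 h1 hM₀ hM hM₁ hB₀ hB₁
      (Good.E hp0 hp (by positivity) le_rfl h0 h1 P hM₀ hM hM₁)

theorem eps23 (K : ι → Matrix m n ℂ) {p q s ε t : ℝ} (hq : -1 ≤ q) (hq0 : q ≤ 0)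
    (hs : 0 < s) (hε : 0 < ε) (H : (-1 ≤ p ∧ p ≤ 0) ∨ (1 ≤ p ∧ p ≤ 2 ∧ 1 ≤ s * (p + q)))
    {A₀ A₁ : Matrix m m ℂ} (hA₀ : A₀.PosDef) (hA₁ : A₁.PosDef)
    {B₀ B₁ : Matrix n n ℂ} (hB₀ : B₀.PosDef) (hB₁ : B₁.PosDef) (h0 : 0 ≤ t) (h1 : t ≤ 1) :
    T (matPow (mix t B₀ B₁) (q / 2) * Mf K p ε (mix t A₀ A₁) * matPow (mix t B₀ B₁) (q / 2)) s ≤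
    t * T (matPow B₀ (q / 2) * Mf K p ε A₀ * matPow B₀ (q / 2)) s +
      (1 - t) * T (matPow B₁ (q / 2) * Mf K p ε A₁ * matPow B₁ (q / 2)) s := by
  have hM₀ := mf_posDef (p := p) hε hA₀ K
  have hM₁ := mf_posDef (p := p) hε hA₁ K
  have hM := mf_posDef (p := p) hε (mix_posDef h0 h1 hA₀ hA₁) K
  have hx : 0 < 1 - s * q := by nlinarith
  have G : Good 1 (s / (1 - s * q)) t (Mf K p ε A₀) (Mf K p ε (mix t A₀ A₁)) (Mf K p ε A₁) := by
    rcases H with ⟨ha, hb⟩ | ⟨ha, hb, hc⟩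
    · exact Good.C2 (by positivity) h0 h1 (PropS.mf h0 h1 ((JC.neg ha hb).congr (by intros; ring))
        ((JC.neg ha hb).congr (by intros; ring)) hε.le hA₀ hA₁ K) hM₀ hM hM₁
    · refine Good.C3 ha hb ?_ h0 h1 (PropS.mf h0 h1 ((JC.ando ha hb).congr (by intros; ring))
        ((JC.ando ha hb).congr (by intros; ring)) hε.le hA₀ hA₁ K) hM₀ hM hM₁
      rw [div_le_div_iff₀ (by linarith) hx]
      linarith
  rcases hq0.eq_or_lt with rfl | hq0
  · have := joint0 hB₀ (mix_posDef h0 h1 hB₀ hB₁) hB₁ G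
    simp only [mul_zero, sub_zero, div_one, one_mul] at this ⊢
    exact this
  · exact jointB hq0 hq hs h0 h1 hM₀ hM hM₁ hB₀ hB₁ G

end p5

section p6
variable {n : Type*} [Fintype n] [DecidableEq n]

open scoped Matrix.Norms.L2Operator in
open Topology in
theorem pw_cont {s : ℝ} (hs : 0 < s) (a : ℝ → Matrix n n ℂ) (ha : Continuous a)
    (hh : ∀ x, (a x).IsHermitian) : Continuous fun x => T (a x) s := by
  have e : ∀ x, matPow (a x) s = cfc (fun y : ℝ => (max y 0) ^ s) (a x) := by
    intro x
    rw [(hh x).cfc_eq]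
    unfold matPow Matrix.IsHermitian.cfc
    rw [dif_pos (hh x), Unitary.conjStarAlgAut_apply]
    congr 3
    ext i
    simp only [Function.comp_apply]
    congr 1
    split_ifs with h
    · rw [max_eq_left h.le]; rfl
    · rw [max_eq_right (not_lt.mp h), Real.zero_rpow hs.ne']; rfl
  have hf : Continuous fun y : ℝ => (max y 0) ^ s :=
    (continuous_id.max continuous_const).rpow_const fun _ => Or.inr hs.le
  have hc : Continuous fun x => cfc (fun y : ℝ => (max y 0) ^ s) (a x) :=
    Continuous.cfc_of_mem_nhdsSet (s := Set.univ) _ (by simp) ha hh hf.continuousOn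
  unfold T
  simp only [e]
  exact Complex.continuous_re.comp (Continuous.matrix_trace hc)

theorem T_lim {ι m : Type*} [Fintype ι] [Fintype m] [DecidableEq m] (K : ι → Matrix m n ℂ)
    {p s q : ℝ} (hs : 0 < s) {A : Matrix m m ℂ} (hA : A.PosDef) {B : Matrix n n ℂ} (hB : B.PosDef) :
    Filter.Tendsto (fun ε : ℝ => T (matPow B q * Mf K p ε A * matPow B q) s)
      (nhdsWithin 0 (Set.Ioi 0)) (nhds (T (matPow B q * Mf K p 0 A * matPow B q) s)) := by
  have hc : Continuous fun ε : ℝ => T (matPow B q * Mf K p ε A * matPow B q) s := by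
    apply pw_cont hs
    · unfold Mf
      refine (continuous_const.matrix_mul (continuous_const.add ?_)).matrix_mul continuous_const
      exact Complex.continuous_ofReal.smul continuous_const
    · intro ε
      have h : (Mf K p ε A).IsHermitian := by
        unfold Mf
        refine IsHermitian.add ?_ ?_
        · exact (posSemidef_sum _ fun i _ =>
            (pw_posDef hA p).posSemidef.conjTranspose_mul_mul_same (K i)).isHermitian
        · unfold IsHermitian
          simp
      have := isHermitian_conjTranspose_mul_mul (matPow B q) h
      rwa [pw_herm hB] at this
  exact (hc.tendsto 0).mono_left nhdsWithin_le_nhds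

theorem Ffun_eq {m n₁ : Type*} [Fintype m] [DecidableEq m] [Fintype n₁] [DecidableEq n₁]
    (K : Matrix m (n₁ × n) ℂ) (p q s : ℝ) (A : Matrix m m ℂ) (B : Matrix n n ℂ) :
    Ffun K p q s A B = T (matPow B (q / 2) *
      Mf (fun i : n₁ => (of fun x j => K x (i, j) : Matrix m n ℂ)) p 0 A * matPow B (q / 2)) s := by
  have : ptraceFst (Kᴴ * matPow A p * K) =
      Mf (fun i : n₁ => (of fun x j => K x (i, j) : Matrix m n ℂ)) p 0 A := by
    unfold Mf ptraceFst
    ext j j'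
    simp [Matrix.sum_apply, Matrix.mul_apply]
  unfold Ffun T
  rw [this]

end p6

/-- joint concavity/convexity of
`(A,B) ↦ Tr[(B^{q/2} · Tr₁(K† A^p K) · B^{q/2})^s]` in the three parameter regimes. -/
theorem stmt3 {m n₁ n₂ : Type*} [Fintype m] [DecidableEq m]
    [Fintype n₁] [DecidableEq n₁] [Fintype n₂] [DecidableEq n₂]
    (K : Matrix m (n₁ × n₂) ℂ) (p q s : ℝ)
    (A₀ A₁ : Matrix m m ℂ) (hA₀ : A₀.PosDef) (hA₁ : A₁.PosDef)
    (B₀ B₁ : Matrix n₂ n₂ ℂ) (hB₀ : B₀.PosDef) (hB₁ : B₁.PosDef)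
    (t : ℝ) (ht0 : 0 ≤ t) (ht1 : t ≤ 1) :
    ((0 ≤ q ∧ q ≤ p ∧ p ≤ 1 ∧ 0 < s ∧ s ≤ 1 / (p + q)) →
      Ffun K p q s ((t : ℂ) • A₀ + ((1 - t : ℝ) : ℂ) • A₁)
          ((t : ℂ) • B₀ + ((1 - t : ℝ) : ℂ) • B₁) ≥
        t * Ffun K p q s A₀ B₀ + (1 - t) * Ffun K p q s A₁ B₁) ∧
    ((-1 ≤ q ∧ q ≤ p ∧ p ≤ 0 ∧ 0 < s) →
      Ffun K p q s ((t : ℂ) • A₀ + ((1 - t : ℝ) : ℂ) • A₁)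
          ((t : ℂ) • B₀ + ((1 - t : ℝ) : ℂ) • B₁) ≤
        t * Ffun K p q s A₀ B₀ + (1 - t) * Ffun K p q s A₁ B₁) ∧
    ((-1 ≤ q ∧ q ≤ 0 ∧ 1 ≤ p ∧ p ≤ 2 ∧ (p, q) ≠ ((1 : ℝ), (-1 : ℝ)) ∧ 1 / (p + q) ≤ s) →
      Ffun K p q s ((t : ℂ) • A₀ + ((1 - t : ℝ) : ℂ) • A₁)
          ((t : ℂ) • B₀ + ((1 - t : ℝ) : ℂ) • B₁) ≤
        t * Ffun K p q s A₀ B₀ + (1 - t) * Ffun K p q s A₁ B₁) := by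
  simp only [Ffun_eq]
  set K' : n₁ → Matrix m n₂ ℂ := fun i => of fun x j => K x (i, j)
  have lt : ∀ hs : 0 < s, Filter.Tendsto (fun ε : ℝ => T (matPow (mix t B₀ B₁) (q / 2) *
      Mf K' p ε (mix t A₀ A₁) * matPow (mix t B₀ B₁) (q / 2)) s)
      (nhdsWithin 0 (Set.Ioi 0)) (nhds (T (matPow (mix t B₀ B₁) (q / 2) *
      Mf K' p 0 (mix t A₀ A₁) * matPow (mix t B₀ B₁) (q / 2)) s)) := fun hs =>
    T_lim K' hs (mix_posDef ht0 ht1 hA₀ hA₁) (mix_posDef ht0 ht1 hB₀ hB₁)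
  have lr := fun hs : 0 < s => ((T_lim K' (p := p) (q := q / 2) hs hA₀ hB₀).const_mul t).add
    ((T_lim K' (p := p) (q := q / 2) hs hA₁ hB₁).const_mul (1 - t))
  refine ⟨?_, ?_, ?_⟩
  · rintro ⟨hq, hqp, hp, hs, hspq⟩
    refine le_of_tendsto_of_tendsto (lr hs) (lt hs) ?_
    filter_upwards [self_mem_nhdsWithin] with ε hε
    exact eps1 K' hq hqp hp hs hspq hε hA₀ hA₁ hB₀ hB₁ ht0 ht1
  · rintro ⟨hq, hqp, hp, hs⟩
    refine le_of_tendsto_of_tendsto (lt hs) (lr hs) ?_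
    filter_upwards [self_mem_nhdsWithin] with ε hε
    exact eps23 K' hq (hqp.trans hp) hs hε (Or.inl ⟨hq.trans hqp, hp⟩) hA₀ hA₁ hB₀ hB₁ ht0 ht1
  · rintro ⟨hq, hq0, hp, hp2, hne, hs1⟩
    have hpq : 0 < p + q := by
      by_contra h
      apply hne
      rw [Prod.mk.injEq]
      constructor <;> linarith
    have hs : 0 < s := lt_of_lt_of_le (by positivity) hs1
    refine le_of_tendsto_of_tendsto (lt hs) (lr hs) ?_
    filter_upwards [self_mem_nhdsWithin] with ε hε
    exact eps23 K' hq hq0 hs hε (Or.inr ⟨hp, hp2, by rwa [div_le_iff₀ hpq] at hs1⟩)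
      hA₀ hA₁ hB₀ hB₁ ht0 ht1
end

section
/- Let H be a finite-dimensional Hilbert space, K an invertible matrix on H, A and B positive definite matrices on H, and p, q real. Suppose the pair (s,r) satisfies either (i) 0 < r ≤ 1, 0 < s ≤ 1/r and r·s < 1, or (ii) −1 ≤ r < 0 and s > 0. Then Tr[(A^{p/2} K B^q K† A^{p/2})^{s/(1−rs)}] = (opt_C Tr[(A^{p/2} K B^{q/2} C^r B^{q/2} K† A^{p/2})^s])^{1/(1−rs)}, where opt_C is the supremum over all density matrices C on H in case (i) and the infimum over all positive definite density matrices C on H in case (ii). -/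
open scoped Kronecker ComplexOrder
open Matrix

/-- `Φ(C) = Tr[(A^{p/2} K B^{q/2} C^r B^{q/2} K† A^{p/2})^s]` of Statement 5. -/
noncomputable def Phi5 {n : Type*} [Fintype n] [DecidableEq n]
    (K : Matrix n n ℂ) (p q r s : ℝ)
    (A B C : Matrix n n ℂ) : ℝ :=
  (Matrix.trace (matPow
    (matPow A (p / 2) * K * matPow B (q / 2) * matPow C r * matPow B (q / 2) *
      Kᴴ * matPow A (p / 2)) s)).re


/-- scalar power -/
noncomputable def phiS (t x : ℝ) : ℝ := if 0 < x then x ^ t else 0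

/-- real diagonal -/
noncomputable def dg {n : Type*} [DecidableEq n] (d : n → ℝ) : Matrix n n ℂ :=
  Matrix.diagonal (fun i => ((d i : ℝ) : ℂ))

theorem dg_mul {n : Type*} [Fintype n] [DecidableEq n] (d e : n → ℝ) :
    dg d * dg e = dg (fun i => d i * e i) := by
  simp [dg, Matrix.diagonal_mul_diagonal]

theorem dg_conj {n : Type*} [DecidableEq n] (d : n → ℝ) : (dg d)ᴴ = dg d := by
  simp only [dg, Matrix.diagonal_conjTranspose]
  congr 1; ext i; simp

theorem dg_one {n : Type*} [DecidableEq n] : dg (fun _ : n => (1:ℝ)) = 1 := by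
  simp [dg]

theorem dg_add {n : Type*} [DecidableEq n] (d e : n → ℝ) :
    dg d + dg e = dg (fun i => d i + e i) := by
  simp [dg, Matrix.diagonal_add]

theorem phiS_pos {t x : ℝ} (h : 0 < x) : phiS t x = x ^ t := by simp [phiS, h]

theorem phiS_nonneg_arg {t x : ℝ} (ht : t ≠ 0) (h : 0 ≤ x) : phiS t x = x ^ t := by
  rcases h.eq_or_lt with h | h
  · subst h; simp [phiS, Real.zero_rpow ht]
  · exact phiS_pos h

theorem matPow_herm {n : Type*} [Fintype n] [DecidableEq n] (U : Matrix n n ℂ) (d : n → ℝ) :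
    (U * dg d * Uᴴ).IsHermitian := by
  simp [Matrix.IsHermitian, Matrix.conjTranspose_mul, dg_conj, Matrix.mul_assoc]

theorem spec {n : Type*} [Fintype n] [DecidableEq n] {M : Matrix n n ℂ} (hM : M.IsHermitian) :
    M = (hM.eigenvectorUnitary : Matrix n n ℂ) * dg hM.eigenvalues *
      (hM.eigenvectorUnitary : Matrix n n ℂ)ᴴ := by
  conv_lhs => rw [hM.spectral_theorem]
  rw [Unitary.conjStarAlgAut_apply]
  rfl

theorem eigU {n : Type*} [Fintype n] [DecidableEq n] {M : Matrix n n ℂ} (hM : M.IsHermitian) :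
    (hM.eigenvectorUnitary : Matrix n n ℂ)ᴴ * (hM.eigenvectorUnitary : Matrix n n ℂ) = 1 := by
  have := Unitary.coe_star_mul_self hM.eigenvectorUnitary
  exact this

theorem matPow_cj {n : Type*} [Fintype n] [DecidableEq n] (U : Matrix n n ℂ) (hU : Uᴴ * U = 1)
    (d : n → ℝ) (t : ℝ) : matPow (U * dg d * Uᴴ) t = U * dg (fun i => phiS t (d i)) * Uᴴ := by
  have hM := matPow_herm U d
  rw [matPow, dif_pos hM]
  have hs := spec hM
  have hV := eigU hM
  set V := (hM.eigenvectorUnitary : Matrix n n ℂ)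
  set l := hM.eigenvalues
  change V * dg (fun i => phiS t (l i)) * Vᴴ = _
  have hU' : U * Uᴴ = 1 := mul_eq_one_comm.mp hU
  have hV' : V * Vᴴ = 1 := mul_eq_one_comm.mp hV
  have h1 : dg d * (Uᴴ * V) = (Uᴴ * V) * dg l := by
    calc dg d * (Uᴴ * V) = (Uᴴ * U) * dg d * (Uᴴ * V) := by rw [hU, Matrix.one_mul]
      _ = Uᴴ * (U * dg d * Uᴴ) * V := by simp only [Matrix.mul_assoc]
      _ = Uᴴ * (V * dg l * Vᴴ) * V := by rw [← hs]
      _ = (Uᴴ * V) * dg l * (Vᴴ * V) := by simp only [Matrix.mul_assoc]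
      _ = _ := by rw [hV, Matrix.mul_one]
  have h2 : dg (fun i => phiS t (d i)) * (Uᴴ * V) = (Uᴴ * V) * dg (fun i => phiS t (l i)) := by
    ext i j
    have := congrFun (congrFun h1 i) j
    simp only [dg, Matrix.diagonal_mul, Matrix.mul_diagonal] at this ⊢
    by_cases hw : (Uᴴ * V) i j = 0
    · rw [hw]; simp
    · have : (d i : ℂ) = l j := by
        rw [mul_comm] at this
        exact mul_left_cancel₀ hw this
      have : d i = l j := by exact_mod_cast this
      rw [this, mul_comm]
  calc V * dg (fun i => phiS t (l i)) * Vᴴ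
      = (U * Uᴴ) * V * dg (fun i => phiS t (l i)) * Vᴴ := by rw [hU', Matrix.one_mul]
    _ = U * ((Uᴴ * V) * dg (fun i => phiS t (l i))) * Vᴴ := by simp only [Matrix.mul_assoc]
    _ = U * dg (fun i => phiS t (d i)) * Uᴴ * (V * Vᴴ) := by
        rw [← h2]; simp only [Matrix.mul_assoc]
    _ = _ := by rw [hV', Matrix.mul_one]

theorem tr_cj {n : Type*} [Fintype n] [DecidableEq n] (U : Matrix n n ℂ) (hU : Uᴴ * U = 1)
    (d : n → ℝ) : (U * dg d * Uᴴ).trace = ((∑ i, d i : ℝ) : ℂ) := by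
  rw [Matrix.trace_mul_comm, ← Matrix.mul_assoc, hU, Matrix.one_mul]
  simp [dg, Matrix.trace_diagonal]

/-- trace of power -/
noncomputable def gT {n : Type*} [Fintype n] [DecidableEq n] (M : Matrix n n ℂ) (t : ℝ) : ℝ :=
  (Matrix.trace (matPow M t)).re

theorem gT_cj {n : Type*} [Fintype n] [DecidableEq n] (U : Matrix n n ℂ) (hU : Uᴴ * U = 1)
    (d : n → ℝ) (t : ℝ) : gT (U * dg d * Uᴴ) t = ∑ i, phiS t (d i) := by
  rw [gT, matPow_cj U hU, tr_cj U hU, Complex.ofReal_re]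

theorem psd_spec {n : Type*} [Fintype n] [DecidableEq n] {M : Matrix n n ℂ} (hM : M.PosSemidef) :
    ∃ (U : Matrix n n ℂ) (d : n → ℝ), Uᴴ * U = 1 ∧ (∀ i, 0 ≤ d i) ∧ M = U * dg d * Uᴴ :=
  ⟨_, _, eigU hM.1, hM.eigenvalues_nonneg, spec hM.1⟩

theorem pd_spec {n : Type*} [Fintype n] [DecidableEq n] {M : Matrix n n ℂ} (hM : M.PosDef) :
    ∃ (U : Matrix n n ℂ) (d : n → ℝ), Uᴴ * U = 1 ∧ (∀ i, 0 < d i) ∧ M = U * dg d * Uᴴ :=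
  ⟨_, _, eigU hM.1, hM.eigenvalues_pos, spec hM.1⟩

theorem cj_psd {n : Type*} [Fintype n] [DecidableEq n] (U : Matrix n n ℂ) 
    (d : n → ℝ) (hd : ∀ i, 0 ≤ d i) : (U * dg d * Uᴴ).PosSemidef := by
  apply Matrix.PosSemidef.mul_mul_conjTranspose_same
  apply Matrix.PosSemidef.diagonal
  intro i
  simpa using hd i

theorem cj_pd {n : Type*} [Fintype n] [DecidableEq n] (U : Matrix n n ℂ) (hU : Uᴴ * U = 1)
    (d : n → ℝ) (hd : ∀ i, 0 < d i) : (U * dg d * Uᴴ).PosDef := by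
  have hu : IsUnit U := IsUnit.of_mul_eq_one _ (mul_eq_one_comm.mp hU)
  have : (dg d).PosDef := by
    apply Matrix.PosDef.diagonal
    intro i
    simpa using hd i
  have h2 := (Matrix.IsUnit.posDef_star_right_conjugate_iff (x := dg d) hu).mpr this
  exact h2

theorem matPow_mul {n : Type*} [Fintype n] [DecidableEq n] {C : Matrix n n ℂ} (hC : C.PosSemidef)
    (a b : ℝ) : matPow C a * matPow C b = matPow C (a + b) := by
  obtain ⟨U, d, hU, hd, rfl⟩ := psd_spec hC
  simp only [matPow_cj U hU]
  have : U * dg (fun i => phiS a (d i)) * Uᴴ * (U * dg (fun i => phiS b (d i)) * Uᴴ)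
      = U * (dg (fun i => phiS a (d i)) * ((Uᴴ * U) * dg (fun i => phiS b (d i)))) * Uᴴ := by
    simp only [Matrix.mul_assoc]
  rw [this, hU, Matrix.one_mul, dg_mul]
  congr 3
  ext i
  by_cases h : 0 < d i
  · simp [phiS, h, Real.rpow_add h]
  · simp [phiS, h]

theorem matPow_zero {n : Type*} [Fintype n] [DecidableEq n] {C : Matrix n n ℂ} (hC : C.PosDef) :
    matPow C 0 = 1 := by
  obtain ⟨U, d, hU, hd, rfl⟩ := pd_spec hC
  rw [matPow_cj U hU]
  have : (fun i => phiS 0 (d i)) = fun _ => (1:ℝ) := by ext i; simp [phiS, hd i]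
  rw [this, dg_one, Matrix.mul_one]
  exact mul_eq_one_comm.mp hU

theorem matPow_conj {n : Type*} [Fintype n] [DecidableEq n] {C : Matrix n n ℂ} (hC : C.PosSemidef)
    (a : ℝ) : (matPow C a)ᴴ = matPow C a := by
  obtain ⟨U, d, hU, hd, rfl⟩ := psd_spec hC
  rw [matPow_cj U hU]
  exact matPow_herm _ _

theorem matPow_unit {n : Type*} [Fintype n] [DecidableEq n] {C : Matrix n n ℂ} (hC : C.PosDef)
    (a : ℝ) : IsUnit (matPow C a) := by
  apply IsUnit.of_mul_eq_one (matPow C (-a))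
  rw [matPow_mul hC.posSemidef, add_neg_cancel, matPow_zero hC]

theorem svd {n : Type*} [Fintype n] [DecidableEq n] {Y : Matrix n n ℂ} (hY : IsUnit Y) :
    ∃ (V E : Matrix n n ℂ) (z : n → ℝ), Vᴴ * V = 1 ∧ Eᴴ * E = 1 ∧ (∀ i, 0 < z i) ∧
      Y = V * dg (fun i => √(z i)) * Eᴴ := by
  have hpd : (Y * Yᴴ).PosDef := by
    have h2 := (Matrix.IsUnit.posDef_star_right_conjugate_iff (x := (1 : Matrix n n ℂ)) hY).mpr
      Matrix.PosDef.one
    rwa [Matrix.mul_one] at h2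
  obtain ⟨V, z, hV, hz, h⟩ := pd_spec hpd
  have hV' : V * Vᴴ = 1 := mul_eq_one_comm.mp hV
  refine ⟨V, Yᴴ * V * dg (fun i => (√(z i))⁻¹), z, hV, ?_, hz, ?_⟩
  · simp only [Matrix.conjTranspose_mul, Matrix.conjTranspose_conjTranspose, dg_conj]
    have : dg (fun i => (√(z i))⁻¹) * (Vᴴ * Y) * (Yᴴ * V * dg (fun i => (√(z i))⁻¹))
      = dg (fun i => (√(z i))⁻¹) * (Vᴴ * (Y * Yᴴ) * V) * dg (fun i => (√(z i))⁻¹) := by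
      simp only [Matrix.mul_assoc]
    rw [this, h]
    have : Vᴴ * (V * dg z * Vᴴ) * V = (Vᴴ * V) * dg z * (Vᴴ * V) := by
      simp only [Matrix.mul_assoc]
    rw [this, hV, Matrix.one_mul, Matrix.mul_one, dg_mul, dg_mul, ← dg_one]
    congr 1
    ext i
    have := Real.mul_self_sqrt (hz i).le
    have h0 := Real.sqrt_pos.mpr (hz i)
    field_simp
    nlinarith
  · simp only [Matrix.conjTranspose_mul, Matrix.conjTranspose_conjTranspose, dg_conj]
    have : V * dg (fun i => √(z i)) * (dg (fun i => (√(z i))⁻¹) * (Vᴴ * Y))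
      = V * (dg (fun i => √(z i)) * dg (fun i => (√(z i))⁻¹)) * Vᴴ * Y := by
      simp only [Matrix.mul_assoc]
    rw [this, dg_mul]
    have : (fun i => √(z i) * (√(z i))⁻¹) = fun _ => (1:ℝ) := by
      ext i; exact mul_inv_cancel₀ (Real.sqrt_pos.mpr (hz i)).ne'
    rw [this, dg_one, Matrix.mul_one, hV', Matrix.one_mul]


theorem ent_cj {n : Type*} [Fintype n] [DecidableEq n] (W : Matrix n n ℂ) (d : n → ℝ) (i : n) :
    (W * dg d * Wᴴ) i i = ((∑ j, Complex.normSq (W i j) * d j : ℝ) : ℂ) := by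
  rw [Matrix.mul_apply]
  push_cast
  apply Finset.sum_congr rfl
  intro j _
  simp only [dg, Matrix.mul_diagonal, Matrix.conjTranspose_apply, Complex.star_def]
  rw [Complex.normSq_eq_conj_mul_self]
  ring

theorem row_sum {n : Type*} [Fintype n] [DecidableEq n] (W : Matrix n n ℂ) (hW : W * Wᴴ = 1)
    (i : n) : ∑ j, Complex.normSq (W i j) = 1 := by
  have h := ent_cj W (fun _ => 1) i
  rw [dg_one, Matrix.mul_one, hW] at h
  simp only [Matrix.one_apply_eq, mul_one] at h
  exact_mod_cast h.symm

theorem col_sum {n : Type*} [Fintype n] [DecidableEq n] (W : Matrix n n ℂ) (hW : Wᴴ * W = 1)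
    (j : n) : ∑ i, Complex.normSq (W i j) = 1 := by
  have h := row_sum Wᴴ (by rwa [Matrix.conjTranspose_conjTranspose]) j
  simpa [Matrix.conjTranspose_apply] using h

/-- diagonal entry in another basis -/
noncomputable def de {n : Type*} [Fintype n] (U M : Matrix n n ℂ) (i : n) : ℝ :=
  ((Uᴴ * M * U) i i).re

theorem uni_mul {n : Type*} [Fintype n] [DecidableEq n] {U V : Matrix n n ℂ}
    (hU : Uᴴ * U = 1) (hV : Vᴴ * V = 1) : (Uᴴ * V)ᴴ * (Uᴴ * V) = 1 := by
  have hU' : U * Uᴴ = 1 := mul_eq_one_comm.mp hU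
  have : (Uᴴ * V)ᴴ * (Uᴴ * V) = Vᴴ * (U * Uᴴ) * V := by
    simp only [Matrix.conjTranspose_mul, Matrix.conjTranspose_conjTranspose, Matrix.mul_assoc]
  rw [this, hU', Matrix.mul_one, hV]

theorem de_cj {n : Type*} [Fintype n] [DecidableEq n] (U V : Matrix n n ℂ) (d : n → ℝ) (i : n) :
    de U (V * dg d * Vᴴ) i = ∑ j, Complex.normSq ((Uᴴ * V) i j) * d j := by
  have : Uᴴ * (V * dg d * Vᴴ) * U = (Uᴴ * V) * dg d * (Uᴴ * V)ᴴ := by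
    simp only [Matrix.conjTranspose_mul, Matrix.conjTranspose_conjTranspose, Matrix.mul_assoc]
  rw [de, this, ent_cj, Complex.ofReal_re]

theorem de_sum {n : Type*} [Fintype n] [DecidableEq n] (U M : Matrix n n ℂ) (hU : Uᴴ * U = 1) :
    ∑ i, de U M i = M.trace.re := by
  have : (Uᴴ * M * U).trace = M.trace := by
    rw [Matrix.trace_mul_comm, ← Matrix.mul_assoc, mul_eq_one_comm.mp hU, Matrix.one_mul]
  rw [← this, Matrix.trace, Complex.re_sum]
  rfl

theorem jensen_convex {n : Type*} [Fintype n] [DecidableEq n] {U V : Matrix n n ℂ} 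
    (hU : Uᴴ * U = 1) (hV : Vᴴ * V = 1) {S : Set ℝ} {f : ℝ → ℝ} (hf : ConvexOn ℝ S f)
    (d : n → ℝ) (hd : ∀ i, d i ∈ S) (i : n) :
    f (de U (V * dg d * Vᴴ) i) ≤ de U (V * dg (fun i => f (d i)) * Vᴴ) i := by
  rw [de_cj, de_cj]
  exact hf.map_sum_le (fun j _ => Complex.normSq_nonneg _)
    (row_sum _ (mul_eq_one_comm.mp (uni_mul hU hV)) i) (fun j _ => hd j)

theorem jensen_concave {n : Type*} [Fintype n] [DecidableEq n] {U V : Matrix n n ℂ} 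
    (hU : Uᴴ * U = 1) (hV : Vᴴ * V = 1) {S : Set ℝ} {f : ℝ → ℝ} (hf : ConcaveOn ℝ S f)
    (d : n → ℝ) (hd : ∀ i, d i ∈ S) (i : n) :
    de U (V * dg (fun i => f (d i)) * Vᴴ) i ≤ f (de U (V * dg d * Vᴴ) i) := by
  rw [de_cj, de_cj]
  exact hf.le_map_sum (fun j _ => Complex.normSq_nonneg _)
    (row_sum _ (mul_eq_one_comm.mp (uni_mul hU hV)) i) (fun j _ => hd j)

theorem de_nonneg {n : Type*} [Fintype n] [DecidableEq n] (U : Matrix n n ℂ) 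
    {M : Matrix n n ℂ} (hM : M.PosSemidef) (i : n) : 0 ≤ de U M i := by
  obtain ⟨V, d, hV, hd, rfl⟩ := psd_spec hM
  rw [de_cj]
  exact Finset.sum_nonneg fun j _ => mul_nonneg (Complex.normSq_nonneg _) (hd j)

theorem de_pos {n : Type*} [Fintype n] [DecidableEq n] {U : Matrix n n ℂ} (hU : Uᴴ * U = 1)
    {M : Matrix n n ℂ} (hM : M.PosDef) (i : n) : 0 < de U M i := by
  obtain ⟨V, d, hV, hd, rfl⟩ := pd_spec hM
  rw [de_cj]
  have h1 := (row_sum _ (mul_eq_one_comm.mp (uni_mul hU hV)) i)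
  have h0 : ∀ j ∈ Finset.univ, 0 ≤ Complex.normSq ((Uᴴ * V) i j) * d j :=
    fun j _ => mul_nonneg (Complex.normSq_nonneg _) (hd j).le
  refine lt_of_le_of_ne (Finset.sum_nonneg h0) fun h => ?_
  have h2 := (Finset.sum_eq_zero_iff_of_nonneg h0).mp h.symm
  have : ∑ j, Complex.normSq ((Uᴴ * V) i j) = 0 := by
    apply Finset.sum_eq_zero
    intro j hj
    exact (mul_eq_zero.mp (h2 j hj)).resolve_right (hd j).ne'
  linarith

theorem peierls_convex {n : Type*} [Fintype n] [DecidableEq n] {U M : Matrix n n ℂ} 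
    (hU : Uᴴ * U = 1) (hM : M.PosSemidef) {a : ℝ} (ha : 1 ≤ a) :
    ∑ i, (de U M i) ^ a ≤ gT M a := by
  obtain ⟨V, d, hV, hd, rfl⟩ := psd_spec hM
  calc ∑ i, (de U (V * dg d * Vᴴ) i) ^ a
      ≤ ∑ i, de U (V * dg (fun i => (d i) ^ a) * Vᴴ) i :=
        Finset.sum_le_sum fun i _ => jensen_convex hU hV (convexOn_rpow ha) d hd i
    _ = ∑ i, (d i) ^ a := by rw [de_sum _ _ hU, tr_cj V hV, Complex.ofReal_re]
    _ = _ := by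
      rw [gT_cj V hV]
      exact Finset.sum_congr rfl fun i _ => (phiS_nonneg_arg (by linarith) (hd i)).symm

theorem peierls_concave {n : Type*} [Fintype n] [DecidableEq n] {U M : Matrix n n ℂ} 
    (hU : Uᴴ * U = 1) (hM : M.PosSemidef) {a : ℝ} (ha0 : 0 < a) (ha : a ≤ 1) :
    gT M a ≤ ∑ i, (de U M i) ^ a := by
  obtain ⟨V, d, hV, hd, rfl⟩ := psd_spec hM
  calc gT (V * dg d * Vᴴ) a = ∑ i, (d i) ^ a := by
        rw [gT_cj V hV]
        exact Finset.sum_congr rfl fun i _ => (phiS_nonneg_arg ha0.ne' (hd i))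
    _ = ∑ i, de U (V * dg (fun i => (d i) ^ a) * Vᴴ) i := by
        rw [de_sum _ _ hU, tr_cj V hV, Complex.ofReal_re]
    _ ≤ _ := Finset.sum_le_sum fun i _ =>
        jensen_concave hU hV (Real.concaveOn_rpow ha0.le ha) d hd i

theorem pow_concave {n : Type*} [Fintype n] [DecidableEq n] {U C : Matrix n n ℂ} 
    (hU : Uᴴ * U = 1) (hC : C.PosSemidef) {r : ℝ} (hr0 : 0 < r) (hr : r ≤ 1) (i : n) :
    de U (matPow C r) i ≤ (de U C i) ^ r := by
  obtain ⟨V, d, hV, hd, rfl⟩ := psd_spec hC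
  rw [matPow_cj V hV]
  have : (fun i => phiS r (d i)) = fun i => (d i) ^ r := by
    ext i; exact phiS_nonneg_arg hr0.ne' (hd i)
  rw [this]
  exact jensen_concave hU hV (Real.concaveOn_rpow hr0.le hr) d hd i

theorem pow_convex {n : Type*} [Fintype n] [DecidableEq n] {U C : Matrix n n ℂ} 
    (hU : Uᴴ * U = 1) (hC : C.PosDef) {r : ℝ} (hr0 : 0 < r) (hr : r ≤ 1) (i : n) :
    (de U C i) ^ (-r) ≤ de U (matPow C (-r)) i := by
  have hpos := de_pos hU hC i
  have h1 := pow_concave hU hC.posSemidef hr0 hr i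
  obtain ⟨V, d, hV, hd, rfl⟩ := pd_spec hC
  rw [matPow_cj V hV] at h1 ⊢
  have e1 : (fun i => phiS (-r) (d i)) = fun i => (phiS r (d i)) ^ (-1 : ℤ) := by
    ext i; rw [phiS_pos (hd i), phiS_pos (hd i), Real.rpow_neg (hd i).le, _root_.zpow_neg_one]
  have hp : ∀ i, 0 < phiS r (d i) := fun i => by
    rw [phiS_pos (hd i)]; exact Real.rpow_pos_of_pos (hd i) _
  have h2 := jensen_convex hU hV (convexOn_zpow (𝕜 := ℝ) (-1)) (fun i => phiS r (d i)) hp i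
  rw [e1]
  refine le_trans ?_ h2
  rw [Real.rpow_neg hpos.le, _root_.zpow_neg_one]
  exact inv_anti₀ (de_pos hU (cj_pd V hV _ hp) i) h1

theorem de_svd {n : Type*} [Fintype n] [DecidableEq n] {V E : Matrix n n ℂ} (hV : Vᴴ * V = 1)
    (w : n → ℝ) (D : Matrix n n ℂ) (i : n) :
    de V ((V * dg w * Eᴴ) * D * (V * dg w * Eᴴ)ᴴ) i = w i * w i * de E D i := by
  have : Vᴴ * ((V * dg w * Eᴴ) * D * (V * dg w * Eᴴ)ᴴ) * V
      = dg w * (Eᴴ * D * E) * dg w := by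
    have : Vᴴ * ((V * dg w * Eᴴ) * D * (V * dg w * Eᴴ)ᴴ) * V
      = (Vᴴ * V) * dg w * (Eᴴ * D * E) * dg w * (Vᴴ * V) := by
      simp only [Matrix.conjTranspose_mul, Matrix.conjTranspose_conjTranspose, Matrix.mul_assoc,
        dg_conj]
    rw [this, hV, Matrix.one_mul, Matrix.mul_one]
  rw [de, this, de]
  simp only [dg, Matrix.diagonal_mul, Matrix.mul_diagonal, Complex.mul_re, Complex.ofReal_re,
    Complex.ofReal_im, Complex.mul_im]
  ring

theorem gT_svd {n : Type*} [Fintype n] [DecidableEq n] {V E : Matrix n n ℂ} (hV : Vᴴ * V = 1)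
    (hE : Eᴴ * E = 1) (z : n → ℝ) (hz : ∀ i, 0 < z i) (d : n → ℝ) :
    (V * dg (fun i => √(z i)) * Eᴴ) * (E * dg d * Eᴴ) * (V * dg (fun i => √(z i)) * Eᴴ)ᴴ
      = V * dg (fun i => z i * d i) * Vᴴ := by
  have : (V * dg (fun i => √(z i)) * Eᴴ) * (E * dg d * Eᴴ) * (V * dg (fun i => √(z i)) * Eᴴ)ᴴ
      = V * (dg (fun i => √(z i)) * ((Eᴴ * E) * dg d * (Eᴴ * E)) * dg (fun i => √(z i))) * Vᴴ := by
      simp only [Matrix.conjTranspose_mul, Matrix.conjTranspose_conjTranspose, Matrix.mul_assoc,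
        dg_conj]
  rw [this, hE, Matrix.one_mul, Matrix.mul_one, dg_mul, dg_mul]
  congr 3
  ext i
  have := Real.mul_self_sqrt (hz i).le
  linear_combination d i * this

theorem gT_svd1 {n : Type*} [Fintype n] [DecidableEq n] {V E : Matrix n n ℂ} (hV : Vᴴ * V = 1)
    (hE : Eᴴ * E = 1) (z : n → ℝ) (hz : ∀ i, 0 < z i) (b : ℝ) :
    gT ((V * dg (fun i => √(z i)) * Eᴴ) * (V * dg (fun i => √(z i)) * Eᴴ)ᴴ) b
      = ∑ i, (z i) ^ b := by
  have h := gT_svd hV hE z hz (fun _ => 1)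
  rw [dg_one, Matrix.mul_one, mul_eq_one_comm.mp hE, Matrix.mul_one] at h
  rw [h, gT_cj V hV]
  apply Finset.sum_congr rfl
  intro i _
  rw [mul_one, phiS_pos (hz i)]

/-- scalar Hölder -/
theorem holder_s {n : Type*} [Fintype n] (z c : n → ℝ) (hz : ∀ i, 0 ≤ z i) (hc : ∀ i, 0 ≤ c i)
    {r a b : ℝ} (hr : 0 < r) (ha : 0 < a) (hb : 0 < b) (h : 1 / a = 1 / b + r) :
    ∑ i, (z i * (c i) ^ r) ^ a ≤ (∑ i, (z i) ^ b) ^ (a / b) * (∑ i, c i) ^ (r * a) := by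
  have hra : 0 < r * a := mul_pos hr ha
  have h' : a / b + r * a = 1 := by field_simp at h ⊢; linarith
  have hab : 0 < a / b := div_pos ha hb
  have hc' : Real.HolderConjugate (b / a) (1 / (r * a)) := by
    rw [Real.holderConjugate_iff]
    constructor
    · rw [lt_div_iff₀ ha]
      have : a / b < 1 := by linarith
      rw [div_lt_one hb] at this
      linarith
    · rw [inv_div, one_div, inv_inv]; exact h'
  have := Real.inner_le_Lp_mul_Lq_of_nonneg Finset.univ hc' (f := fun i => (z i) ^ a)
    (g := fun i => (c i) ^ (r * a)) (fun i _ => Real.rpow_nonneg (hz i) _)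
    (fun i _ => Real.rpow_nonneg (hc i) _)
  have e1 : ∀ i, ((z i) ^ a) ^ (b / a) = (z i) ^ b := fun i => by
    rw [← Real.rpow_mul (hz i)]; congr 1; field_simp
  have e2 : ∀ i, ((c i) ^ (r * a)) ^ (1 / (r * a)) = c i := fun i => by
    rw [← Real.rpow_mul (hc i), mul_one_div_cancel hra.ne', Real.rpow_one]
  simp only [e1, e2, one_div_div, one_div_one_div, div_one] at this
  refine le_trans (le_of_eq ?_) this
  apply Finset.sum_congr rfl
  intro i _
  rw [Real.mul_rpow (hz i) (Real.rpow_nonneg (hc i) _), ← Real.rpow_mul (hc i)]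

theorem lemA {n : Type*} [Fintype n] [DecidableEq n] {Y C : Matrix n n ℂ} (hY : IsUnit Y)
    (hC : C.PosSemidef) {r a b : ℝ} (hr : 0 < r) (hr1 : r ≤ 1) (ha : 0 < a) (ha1 : a ≤ 1)
    (hb : 0 < b) (h : 1 / a = 1 / b + r) :
    gT (Y * matPow C r * Yᴴ) a ≤ (gT (Y * Yᴴ) b) ^ (a / b) * C.trace.re ^ (r * a) := by
  obtain ⟨V, E, z, hV, hE, hz, rfl⟩ := svd hY
  have hpsd : (matPow C r).PosSemidef := by
    obtain ⟨W, d, hW, hd, rfl⟩ := psd_spec hC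
    rw [matPow_cj W hW]
    apply cj_psd
    intro i
    rw [phiS_nonneg_arg hr.ne' (hd i)]
    exact Real.rpow_nonneg (hd i) _
  have h1 := peierls_concave hV (hpsd.mul_mul_conjTranspose_same
    (V * dg (fun i => √(z i)) * Eᴴ)) ha ha1
  refine h1.trans ?_
  rw [gT_svd1 hV hE z hz, ← de_sum E C hE]
  refine le_trans ?_ (holder_s z (de E C) (fun i => (hz i).le) (de_nonneg E hC) hr ha hb h)
  apply Finset.sum_le_sum
  intro i _
  rw [de_svd hV, Real.mul_self_sqrt (hz i).le]
  apply Real.rpow_le_rpow (mul_nonneg (hz i).le (de_nonneg E hpsd i)) _ ha.le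
  exact mul_le_mul_of_nonneg_left (pow_concave hE hC hr hr1 i) (hz i).le

theorem gT_nonneg {n : Type*} [Fintype n] [DecidableEq n] {M : Matrix n n ℂ} (hM : M.PosSemidef)
    (t : ℝ) : 0 ≤ gT M t := by
  obtain ⟨W, d, hW, hd, rfl⟩ := psd_spec hM
  rw [gT_cj W hW]
  apply Finset.sum_nonneg
  intro i _
  unfold phiS
  split_ifs with h
  · exact Real.rpow_nonneg h.le _
  · exact le_rfl

theorem matPow_psd {n : Type*} [Fintype n] [DecidableEq n] {M : Matrix n n ℂ} (hM : M.PosSemidef)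
    (t : ℝ) : (matPow M t).PosSemidef := by
  obtain ⟨W, d, hW, hd, rfl⟩ := psd_spec hM
  rw [matPow_cj W hW]
  apply cj_psd
  intro i
  unfold phiS
  split_ifs with h
  · exact Real.rpow_nonneg h.le _
  · exact le_rfl

theorem lemB {n : Type*} [Fintype n] [DecidableEq n] {Y C : Matrix n n ℂ} (hY : IsUnit Y)
    (hC : C.PosDef) {r a b : ℝ} (hr : 0 < r) (hr1 : r ≤ 1) (ha : 0 < a) 
    (hb : 1 ≤ b) (h : 1 / a = 1 / b + r) :
    gT (Y * Yᴴ) a ≤ (gT (Y * matPow C (-r) * Yᴴ) b) ^ (a / b) * C.trace.re ^ (r * a) := by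
  have hb0 : 0 < b := by linarith
  obtain ⟨V, E, z, hV, hE, hz, rfl⟩ := svd hY
  have hpsd : (matPow C (-r)).PosSemidef := matPow_psd hC.posSemidef _
  have h1 := peierls_convex hV (hpsd.mul_mul_conjTranspose_same
    (V * dg (fun i => √(z i)) * Eᴴ)) hb
  have hc := de_pos hE hC
  have hp : ∀ i, 0 ≤ z i * (de E C i) ^ (-r) := fun i =>
    mul_nonneg (hz i).le (Real.rpow_nonneg (hc i).le _)
  have h2 : ∑ i, (z i * (de E C i) ^ (-r)) ^ b ≤
      gT ((V * dg (fun i => √(z i)) * Eᴴ) * matPow C (-r) * (V * dg (fun i => √(z i)) * Eᴴ)ᴴ) b := by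
    refine le_trans ?_ h1
    apply Finset.sum_le_sum
    intro i _
    rw [de_svd hV, Real.mul_self_sqrt (hz i).le]
    apply Real.rpow_le_rpow (hp i) _ hb0.le
    exact mul_le_mul_of_nonneg_left (pow_convex hE hC hr hr1 i) (hz i).le
  have h3 := holder_s (fun i => z i * (de E C i) ^ (-r)) (de E C) hp (fun i => (hc i).le)
    hr ha hb0 h
  have e : ∀ i, z i * (de E C i) ^ (-r) * (de E C i) ^ r = z i := fun i => by
    rw [mul_assoc, ← Real.rpow_add (hc i)]; simp
  simp only [e] at h3
  rw [gT_svd1 hV hE z hz]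
  refine h3.trans ?_
  rw [de_sum E C hE]
  have ht : 0 ≤ C.trace.re := by
    rw [← de_sum E C hE]; exact Finset.sum_nonneg fun i _ => (hc i).le
  apply mul_le_mul_of_nonneg_right _ (Real.rpow_nonneg ht _)
  exact Real.rpow_le_rpow (Finset.sum_nonneg fun i _ => Real.rpow_nonneg (hp i) _) h2
    (div_pos ha hb0).le


theorem gT_mono {n : Type*} [Fintype n] [DecidableEq n] {M N : Matrix n n ℂ} (hM : M.PosSemidef)
    (hN : N.PosSemidef) (h : (N - M).PosSemidef) {a : ℝ} (ha : 1 ≤ a) : gT M a ≤ gT N a := by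
  obtain ⟨U, d, hU, hd, hMe⟩ := psd_spec hM
  refine le_trans ?_ (peierls_convex hU hN ha)
  have h1 : ∀ i, de U M i = d i := fun i => by
    rw [hMe, de_cj, hU, Finset.sum_eq_single i]
    · simp
    · intro j _ hj; simp [Matrix.one_apply_ne hj.symm]
    · simp
  have h2 : ∀ i, d i ≤ de U N i := fun i => by
    have := de_nonneg U h i
    have e : de U (N - M) i = de U N i - de U M i := by
      simp [de, Matrix.mul_sub, Matrix.sub_mul]
    rw [e, h1] at this
    linarith
  conv_lhs => rw [hMe]
  rw [gT_cj U hU]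
  apply Finset.sum_le_sum
  intro i _
  rw [phiS_nonneg_arg (by linarith) (hd i)]
  exact Real.rpow_le_rpow (hd i) (h2 i) (by linarith)

theorem mainPD {n : Type*} [Fintype n] [DecidableEq n] {X C : Matrix n n ℂ} (hX : IsUnit X)
    (hC : C.PosDef) {r a b : ℝ} (hr : 0 < r) (hr1 : r ≤ 1) (ha : 0 < a) 
    (hb : 0 < b) (h : 1 / a = 1 / b + r) :
    gT (X * matPow C r * Xᴴ) a ≤ (gT (X * Xᴴ) b) ^ (a / b) * C.trace.re ^ (r * a) := by
  rcases le_total a 1 with h1 | h1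
  · exact lemA hX hC.posSemidef hr hr1 ha h1 hb h
  · have hb1 : 1 ≤ b := by
      have : 1 / b ≤ 1 := by
        have : 1 / a ≤ 1 := by rw [div_le_one ha]; exact h1
        linarith
      rwa [div_le_one hb] at this
    have h2 := lemB (hX.mul (matPow_unit hC (r / 2))) hC hr hr1 ha hb1 h
    have e1 : X * matPow C (r / 2) * (X * matPow C (r / 2))ᴴ = X * matPow C r * Xᴴ := by
      rw [Matrix.conjTranspose_mul, matPow_conj hC.posSemidef]
      have : X * matPow C (r / 2) * (matPow C (r / 2) * Xᴴ)
        = X * (matPow C (r / 2) * matPow C (r / 2)) * Xᴴ := by simp only [Matrix.mul_assoc]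
      rw [this, matPow_mul hC.posSemidef, add_halves]
    have e2 : X * matPow C (r / 2) * matPow C (-r) * (X * matPow C (r / 2))ᴴ = X * Xᴴ := by
      rw [Matrix.conjTranspose_mul, matPow_conj hC.posSemidef]
      have : X * matPow C (r / 2) * matPow C (-r) * (matPow C (r / 2) * Xᴴ)
        = X * (matPow C (r / 2) * matPow C (-r) * matPow C (r / 2)) * Xᴴ := by
          simp only [Matrix.mul_assoc]
      rw [this, matPow_mul hC.posSemidef, matPow_mul hC.posSemidef,
        show r / 2 + -r + r / 2 = 0 by ring, matPow_zero hC, Matrix.mul_one]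
    rwa [e1, e2] at h2

theorem mainPSD {n : Type*} [Fintype n] [DecidableEq n] {X C : Matrix n n ℂ} (hX : IsUnit X)
    (hC : C.PosSemidef) {r a b : ℝ} (hr : 0 < r) (hr1 : r ≤ 1) (ha : 0 < a) 
    (hb : 0 < b) (h : 1 / a = 1 / b + r) :
    gT (X * matPow C r * Xᴴ) a ≤ (gT (X * Xᴴ) b) ^ (a / b) * C.trace.re ^ (r * a) := by
  rcases le_total a 1 with h1 | h1
  · exact lemA hX hC hr hr1 ha h1 hb h
  obtain ⟨W, d, hW, hd, rfl⟩ := psd_spec hC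
  have key : ∀ ε : ℝ, 0 < ε → gT (X * matPow (W * dg d * Wᴴ) r * Xᴴ) a ≤
      (gT (X * Xᴴ) b) ^ (a / b) * (∑ i, (d i + ε)) ^ (r * a) := by
    intro ε hε
    have hpd : (W * dg (fun i => d i + ε) * Wᴴ).PosDef :=
      cj_pd W hW _ fun i => add_pos_of_nonneg_of_pos (hd i) hε
    have h2 := mainPD hX hpd hr hr1 ha hb h
    rw [tr_cj W hW, Complex.ofReal_re] at h2
    refine le_trans ?_ h2
    apply gT_mono ((matPow_psd hC r).mul_mul_conjTranspose_same X)
      ((matPow_psd hpd.posSemidef r).mul_mul_conjTranspose_same X) _ h1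
    rw [← Matrix.sub_mul, ← Matrix.mul_sub]
    apply Matrix.PosSemidef.mul_mul_conjTranspose_same
    rw [matPow_cj W hW, matPow_cj W hW, ← Matrix.sub_mul, ← Matrix.mul_sub]
    have : dg (fun i => phiS r (d i + ε)) - dg (fun i => phiS r (d i))
        = dg (fun i => phiS r (d i + ε) - phiS r (d i)) := by
      simp [dg, Matrix.diagonal_sub]
    rw [this]
    apply cj_psd
    intro i
    rw [phiS_nonneg_arg hr.ne' (hd i), phiS_nonneg_arg hr.ne' (by linarith [hd i])]
    have := Real.rpow_le_rpow (hd i) (show d i ≤ d i + ε by linarith) hr.le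
    linarith
  rw [tr_cj W hW, Complex.ofReal_re]
  have hra : 0 < r * a := mul_pos hr ha
  have hc : Continuous fun ε : ℝ => (gT (X * Xᴴ) b) ^ (a / b) * (∑ i, (d i + ε)) ^ (r * a) := by
    apply Continuous.mul continuous_const
    apply Continuous.rpow_const
    · fun_prop
    · intro _; right; exact hra.le
  have ht := (hc.tendsto 0).mono_left (nhdsWithin_le_nhds (s := Set.Ioi 0))
  simp only [add_zero] at ht
  refine ge_of_tendsto ht ?_
  filter_upwards [self_mem_nhdsWithin] with ε hε
  exact key ε hε

theorem attain {n : Type*} [Fintype n] [DecidableEq n] [Nonempty n] {X : Matrix n n ℂ}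
    (hX : IsUnit X) {r s : ℝ} (hs : 0 < s) (hrs : r * s < 1) :
    ∃ C : Matrix n n ℂ, C.PosDef ∧ C.trace = 1 ∧
      gT (X * matPow C r * Xᴴ) s = (gT (X * Xᴴ) (s / (1 - r * s))) ^ (1 - r * s) := by
  obtain ⟨V, E, z, hV, hE, hz, rfl⟩ := svd hX
  have h1 : 0 < 1 - r * s := by linarith
  rw [gT_svd1 hV hE z hz]
  set t := s / (1 - r * s) with ht
  set T := ∑ i, (z i) ^ t with hT
  have hzt : ∀ i, 0 < (z i) ^ t := fun i => Real.rpow_pos_of_pos (hz i) _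
  have hT0 : 0 < T := Finset.sum_pos (fun i _ => hzt i) Finset.univ_nonempty
  have hd : ∀ i, 0 < (z i) ^ t / T := fun i => div_pos (hzt i) hT0
  refine ⟨E * dg (fun i => (z i) ^ t / T) * Eᴴ, cj_pd E hE _ hd, ?_, ?_⟩
  · rw [tr_cj E hE, ← Finset.sum_div, div_self hT0.ne', Complex.ofReal_one]
  · rw [matPow_cj E hE, gT_svd hV hE z hz, gT_cj V hV]
    have : ∀ i, phiS s (z i * phiS r ((z i) ^ t / T)) = (z i) ^ t * T ^ (-(r * s)) := by
      intro i
      rw [phiS_pos (hd i), phiS_pos (mul_pos (hz i) (Real.rpow_pos_of_pos (hd i) _)),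
        Real.mul_rpow (hz i).le (Real.rpow_nonneg (hd i).le _), ← Real.rpow_mul (hd i).le,
        Real.div_rpow (hzt i).le hT0.le, ← Real.rpow_mul (hz i).le, Real.rpow_neg hT0.le,
        div_eq_mul_inv, ← mul_assoc, ← Real.rpow_add (hz i)]
      congr 2
      have e : t * (1 - r * s) = s := div_mul_cancel₀ _ h1.ne'
      linear_combination -e
    simp only [this]
    rw [← Finset.sum_mul, ← hT, sub_eq_add_neg, Real.rpow_add hT0, Real.rpow_one]

theorem mat_eq {n : Type*} [Fintype n] [DecidableEq n] (K : Matrix n n ℂ) (p q : ℝ)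
    {A B : Matrix n n ℂ} (hA : A.PosDef) (hB : B.PosDef) (D : Matrix n n ℂ) :
    matPow A (p / 2) * K * matPow B (q / 2) * D * matPow B (q / 2) * Kᴴ * matPow A (p / 2)
    = (matPow A (p / 2) * K * matPow B (q / 2)) * D * 
      (matPow A (p / 2) * K * matPow B (q / 2))ᴴ := by
  simp only [Matrix.conjTranspose_mul, matPow_conj hA.posSemidef, matPow_conj hB.posSemidef,
    Matrix.mul_assoc]

theorem mat_eq1 {n : Type*} [Fintype n] [DecidableEq n] (K : Matrix n n ℂ) (p q : ℝ)
    {A B : Matrix n n ℂ} (hA : A.PosDef) (hB : B.PosDef) :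
    matPow A (p / 2) * K * matPow B q * Kᴴ * matPow A (p / 2)
    = (matPow A (p / 2) * K * matPow B (q / 2)) *  
      (matPow A (p / 2) * K * matPow B (q / 2))ᴴ := by
  have := mat_eq K p q hA hB 1
  rw [Matrix.mul_one] at this
  rw [← this, Matrix.mul_assoc (matPow A (p / 2) * K) (matPow B (q / 2)), matPow_mul hB.posSemidef, add_halves]

theorem stmt5 {n : Type*} [Fintype n] [DecidableEq n]
    (K : Matrix n n ℂ) (hK : IsUnit K) (p q r s : ℝ)
    (A B : Matrix n n ℂ) (hA : A.PosDef) (hB : B.PosDef) :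
    ((0 < r ∧ r ≤ 1 ∧ 0 < s ∧ s ≤ 1 / r ∧ r * s < 1) →
      (Matrix.trace (matPow
          (matPow A (p / 2) * K * matPow B q * Kᴴ * matPow A (p / 2))
          (s / (1 - r * s)))).re =
        (sSup {x | ∃ C : Matrix n n ℂ, IsDensity C ∧ x = Phi5 K p q r s A B C})
          ^ (1 / (1 - r * s))) ∧
    ((-1 ≤ r ∧ r < 0 ∧ 0 < s) →
      (Matrix.trace (matPow
          (matPow A (p / 2) * K * matPow B q * Kᴴ * matPow A (p / 2))
          (s / (1 - r * s)))).re =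
        (sInf {x | ∃ C : Matrix n n ℂ, C.PosDef ∧ C.trace = 1 ∧ x = Phi5 K p q r s A B C})
          ^ (1 / (1 - r * s))) := by
  have hXu : IsUnit (matPow A (p / 2) * K * matPow B (q / 2)) :=
    ((matPow_unit hA _).mul hK).mul (matPow_unit hB _)
  simp only [Phi5, mat_eq K p q hA hB, mat_eq1 K p q hA hB]
  set X := matPow A (p / 2) * K * matPow B (q / 2)
  change (_ → gT (X * Xᴴ) (s / (1 - r * s)) =
      (sSup {x | ∃ C : Matrix n n ℂ, IsDensity C ∧ x = gT (X * matPow C r * Xᴴ) s})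
          ^ (1 / (1 - r * s))) ∧
    (_ → gT (X * Xᴴ) (s / (1 - r * s)) =
      (sInf {x | ∃ C : Matrix n n ℂ, C.PosDef ∧ C.trace = 1 ∧ x = gT (X * matPow C r * Xᴴ) s})
          ^ (1 / (1 - r * s)))
  have hg0 : ∀ t, 0 ≤ gT (X * Xᴴ) t := gT_nonneg (Matrix.posSemidef_self_mul_conjTranspose X)
  rcases isEmpty_or_nonempty n with hn | hn
  · have hE : ∀ t, gT (X * Xᴴ) t = 0 := fun t => by simp [gT, Matrix.trace]
    constructor
    · rintro ⟨_, _, _, _, h⟩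
      have : {x | ∃ C : Matrix n n ℂ, IsDensity C ∧ x = gT (X * matPow C r * Xᴴ) s} = ∅ := by
        ext x; simp [IsDensity, Matrix.trace]
      rw [this, hE, Real.sSup_empty, Real.zero_rpow]
      have : 0 < 1 - r * s := by linarith
      positivity
    · rintro ⟨_, h, h'⟩
      have : {x | ∃ C : Matrix n n ℂ, C.PosDef ∧ C.trace = 1 ∧
          x = gT (X * matPow C r * Xᴴ) s} = ∅ := by
        ext x; simp [Matrix.trace]
      rw [this, hE, Real.sInf_empty, Real.zero_rpow]
      have : 0 < 1 - r * s := by nlinarith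
      positivity
  · constructor
    · rintro ⟨hr, hr1, hs, _, hrs⟩
      have h1 : 0 < 1 - r * s := by linarith
      obtain ⟨C0, hC0, hC0t, hC0e⟩ := attain hXu hs hrs
      have hG : IsGreatest {x | ∃ C : Matrix n n ℂ, IsDensity C ∧ x = gT (X * matPow C r * Xᴴ) s}
          ((gT (X * Xᴴ) (s / (1 - r * s))) ^ (1 - r * s)) := by
        refine ⟨⟨C0, ⟨hC0.posSemidef, hC0t⟩, hC0e.symm⟩, ?_⟩
        rintro x ⟨C, ⟨hC, hCt⟩, rfl⟩
        have := mainPSD hXu hC hr hr1 hs (div_pos hs h1) (by field_simp; ring)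
        rw [hCt, Complex.one_re, Real.one_rpow, mul_one] at this
        rwa [div_div_cancel₀ hs.ne'] at this
      rw [hG.csSup_eq, ← Real.rpow_mul (hg0 _), mul_one_div_cancel h1.ne', Real.rpow_one]
    · rintro ⟨hr1, hr, hs⟩
      have hrs : r * s < 1 := by nlinarith
      have h1 : 0 < 1 - r * s := by linarith
      obtain ⟨C0, hC0, hC0t, hC0e⟩ := attain hXu hs hrs
      have hG : IsLeast {x | ∃ C : Matrix n n ℂ, C.PosDef ∧ C.trace = 1 ∧
          x = gT (X * matPow C r * Xᴴ) s} ((gT (X * Xᴴ) (s / (1 - r * s))) ^ (1 - r * s)) := by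
        refine ⟨⟨C0, hC0, hC0t, hC0e.symm⟩, ?_⟩
        rintro x ⟨C, hC, hCt, rfl⟩
        have hm := mainPD (hXu.mul (matPow_unit hC (r / 2))) hC (neg_pos.mpr hr)
          (by linarith) (div_pos hs h1) hs (by field_simp; ring)
        rw [hCt, Complex.one_re, Real.one_rpow, mul_one] at hm
        have e1 : X * matPow C (r / 2) * (X * matPow C (r / 2))ᴴ = X * matPow C r * Xᴴ := by
          rw [Matrix.conjTranspose_mul, matPow_conj hC.posSemidef]
          have : X * matPow C (r / 2) * (matPow C (r / 2) * Xᴴ)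
            = X * (matPow C (r / 2) * matPow C (r / 2)) * Xᴴ := by simp only [Matrix.mul_assoc]
          rw [this, matPow_mul hC.posSemidef, add_halves]
        have e2 : X * matPow C (r / 2) * matPow C (-r) * (X * matPow C (r / 2))ᴴ = X * Xᴴ := by
          rw [Matrix.conjTranspose_mul, matPow_conj hC.posSemidef]
          have : X * matPow C (r / 2) * matPow C (-r) * (matPow C (r / 2) * Xᴴ)
            = X * (matPow C (r / 2) * matPow C (-r) * matPow C (r / 2)) * Xᴴ := by
              simp only [Matrix.mul_assoc]
          rw [this, matPow_mul hC.posSemidef, matPow_mul hC.posSemidef,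
            show r / 2 + -r + r / 2 = 0 by ring, matPow_zero hC, Matrix.mul_one]
        rw [e1, e2] at hm
        have hx0 : 0 ≤ gT (X * matPow C r * Xᴴ) s :=
          gT_nonneg ((matPow_psd hC.posSemidef r).mul_mul_conjTranspose_same X) s
        have := Real.rpow_le_rpow (hg0 _) hm h1.le
        rwa [← Real.rpow_mul hx0, show s / (1 - r * s) / s * (1 - r * s) = 1 by
            rw [div_div, div_mul_eq_mul_div, mul_comm (1 - r * s) s]; exact div_self (mul_pos hs h1).ne',
          Real.rpow_one] at this
      rw [hG.csInf_eq, ← Real.rpow_mul (hg0 _), mul_one_div_cancel h1.ne', Real.rpow_one]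
end
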